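/- Let k ≥ 1 and let H ≤ S_{2·3^k} be the stabilizer of the partition of {1,…,2·3^k} into the two consecutive blocks of size 3^k (so H ≅ S_{3^k} ≀ S_2). Then there exists a bijection between Irr_{3'}(S_{2·3^k}) and Irr_{3'}(H). -/

import Mathlib

open scoped Classical

noncomputable section

/-- The set of irreducible complex characters of a group `G`. -/
def Irr (G : Type) [Group G] : Set (G → ℂ) :=
  {χ | ∃ V : FDRep ℂ G, CategoryTheory.Simple V ∧ FDRep.character V = χ}

/-- The set of irreducible complex characters of `G` whose degree is coprime to `p`. -/
def IrrCoprime (p : ℕ) (G : Type) [Group G] : Set (G → ℂ) :=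
  {χ | ∃ V : FDRep ℂ G, CategoryTheory.Simple V ∧ FDRep.character V = χ ∧
    Nat.Coprime (Module.finrank ℂ V) p}

namespace GB

/-- The group of virtual characters. -/
def VC (G : Type) [Group G] : AddSubgroup (G → ℂ) := AddSubgroup.closure (Irr G)

theorem trace_compl {V : Type} [AddCommGroup V] [Module ℂ V] [FiniteDimensional ℂ V]
    (f : V →ₗ[ℂ] V) (p q : Submodule ℂ V) (h : IsCompl p q)
    (hp : ∀ x ∈ p, f x ∈ p) (hq : ∀ x ∈ q, f x ∈ q) :
    LinearMap.trace ℂ V f = LinearMap.trace ℂ p (f.restrict hp) +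
      LinearMap.trace ℂ q (f.restrict hq) := by
  rw [← LinearMap.trace_prodMap', ← LinearMap.trace_conj' _ (Submodule.prodEquivOfIsCompl p q h)]
  congr 1
  ext v
  obtain ⟨x, rfl⟩ := (Submodule.prodEquivOfIsCompl p q h).surjective v
  simp [LinearEquiv.conj_apply]

theorem character_mem_VC {G : Type} [Group G] [Fintype G] (n : ℕ) :
    ∀ (V : Type) [AddCommGroup V] [Module ℂ V] [FiniteDimensional ℂ V]
      (ρ : Representation ℂ G V), Module.finrank ℂ V = n → ρ.character ∈ VC G := by
  induction n using Nat.strong_induction_on with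
  | _ n ih =>
  intro V _ _ _ ρ hn
  have hinv : Invertible (Nat.card G : ℂ) := invertibleOfNonzero (by simp)
  by_cases hirr : ρ.IsIrreducible
  · apply AddSubgroup.subset_closure
    refine ⟨FDRep.of ρ, ?_, rfl⟩
    rw [FDRep.simple_iff_char_is_norm_one]
    have := Representation.char_orthonormal ρ ρ
    rw [if_pos ⟨Representation.Equiv.refl ρ⟩, inv_mul_eq_one₀ (by simp)] at this
    exact this.symm
  · by_cases hz : Subsingleton V
    · have : ρ.character = 0 := by
        ext g
        simp only [Representation.character, Pi.zero_apply]
        rw [Subsingleton.elim (ρ g) 0, map_zero]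
      rw [this]; exact zero_mem _
    · rw [not_subsingleton_iff_nontrivial] at hz
      have : ∃ U : Subrepresentation ρ, U ≠ ⊥ ∧ U ≠ ⊤ := by
        by_contra hc
        push Not at hc
        apply hirr
        have : Nontrivial (Subrepresentation ρ) := by
          refine ⟨⊥, ⊤, fun h => ?_⟩
          have h2 := congrArg Subrepresentation.toSubmodule h
          exact bot_ne_top (α := Submodule ℂ V) h2
        exact ⟨fun a => by
          by_cases ha : a = ⊥
          · exact Or.inl ha
          · exact Or.inr (hc a ha)⟩
      obtain ⟨U, hU1, hU2⟩ := this
      obtain ⟨W, hW⟩ := exists_isCompl U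
      have hc : IsCompl U.toSubmodule W.toSubmodule := by
        refine ⟨?_, ?_⟩
        · rw [disjoint_iff, ← Subrepresentation.toSubmodule_inf, hW.inf_eq_bot]; rfl
        · rw [codisjoint_iff, ← Subrepresentation.toSubmodule_sup, hW.sup_eq_top]; rfl
      have hUb : U.toSubmodule ≠ ⊥ := fun h =>
        hU1 (Subrepresentation.toSubmodule_injective h)
      have hUt : U.toSubmodule ≠ ⊤ := fun h =>
        hU2 (Subrepresentation.toSubmodule_injective h)
      have hsum := Submodule.finrank_add_eq_of_isCompl hc
      have h1 : Module.finrank ℂ U.toSubmodule < n := hn ▸ Submodule.finrank_lt hUt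
      have h2 : Module.finrank ℂ W.toSubmodule < n := by
        have : 0 < Module.finrank ℂ U.toSubmodule := by
          rw [Nat.pos_iff_ne_zero, Ne, Submodule.finrank_eq_zero]; exact hUb
        omega
      have e : ρ.character = U.toRepresentation.character + W.toRepresentation.character := by
        ext g
        exact trace_compl (ρ g) _ _ hc (fun x hx => U.apply_mem_toSubmodule g hx)
          (fun x hx => W.apply_mem_toSubmodule g hx)
      rw [e]
      exact add_mem (ih _ h1 _ _ rfl) (ih _ h2 _ _ rfl)

/-- Permutation characters are virtual characters. -/
theorem perm_mem_VC {G : Type} [Group G] [Fintype G] (Y : Type) [Fintype Y]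
    (φ : G →* Equiv.Perm Y) :
    (fun g => ((Finset.univ.filter fun y => φ g y = y).card : ℂ)) ∈ VC G := by
  let ρ : Representation ℂ G (Y → ℂ) :=
    { toFun := fun g => Matrix.toLin' (Matrix.of fun a b => if φ g b = a then (1:ℂ) else 0)
      map_one' := by
        rw [Module.End.one_eq_id, ← Matrix.toLin'_one]; congr 1; ext a b
        simp [Matrix.one_apply, eq_comm]
      map_mul' := fun g h => by
        rw [Module.End.mul_eq_comp, ← Matrix.toLin'_mul]
        congr 1; ext a b
        simp [Matrix.mul_apply] }
  have := character_mem_VC _ _ ρ rfl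
  convert this using 1
  ext g
  simp only [Representation.character]
  change _ = LinearMap.trace ℂ _ (Matrix.toLin' _)
  rw [Matrix.trace_toLin'_eq]
  simp [Matrix.trace]

/-- Weighted permutation characters are virtual characters. -/
theorem wperm_mem_VC {G : Type} [Group G] [Fintype G] (Y : Type) [Fintype Y]
    (φ : G →* Equiv.Perm Y) (ε : Y → ℤ) (hε : ∀ g y, ε (φ g y) = ε y) :
    (fun g => ((∑ y, if φ g y = y then ε y else 0 : ℤ) : ℂ)) ∈ VC G := by
  have key : ∀ v : ℤ, (fun g => ((Finset.univ.filter fun y : {y // ε y = v} =>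
      φ g y.1 = y.1).card : ℂ)) ∈ VC G := by
    intro v
    let ψ : G →* Equiv.Perm {y // ε y = v} :=
      { toFun := fun g => (φ g).subtypePerm (fun y => by rw [hε])
        map_one' := by ext; simp
        map_mul' := fun g h => Equiv.ext fun y => Subtype.ext (by
          change φ (g * h) y.1 = φ g (φ h y.1)
          rw [map_mul, Equiv.Perm.mul_apply]) }
    convert perm_mem_VC _ ψ using 5
    simp [ψ, Subtype.ext_iff]
  have : (fun g => ((∑ y, if φ g y = y then ε y else 0 : ℤ) : ℂ)) =
      ∑ v ∈ Finset.univ.image ε, v • (fun g => ((Finset.univ.filter fun y : {y // ε y = v} =>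
      φ g y.1 = y.1).card : ℂ)) := by
    ext g
    rw [Finset.sum_apply]
    rw [← Finset.sum_fiberwise_of_maps_to (s := Finset.univ) (t := Finset.univ.image ε) (g := ε)
      (fun y _ => Finset.mem_image_of_mem _ (Finset.mem_univ y))]
    push_cast
    refine Finset.sum_congr rfl fun v _ => ?_
    rw [Pi.smul_apply, zsmul_eq_mul, Finset.card_filter, Nat.cast_sum, Finset.mul_sum, ← Finset.subtype_univ,
      Finset.sum_subtype_eq_sum_filter (f := fun y => (v:ℂ) * ((if φ g y = y then 1 else 0 : ℕ):ℂ))]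
    refine Finset.sum_congr rfl fun y hy => ?_
    have := (Finset.mem_filter.1 hy).2
    split_ifs <;> simp [this]
  rw [this]
  exact sum_mem fun v _ => zsmul_mem (key v) v

end GB
namespace GB

theorem irr_orth {G : Type} [Group G] [Fintype G] {χ ψ : G → ℂ} (hχ : χ ∈ Irr G)
    (hψ : ψ ∈ Irr G) :
    ∑ g, χ g * ψ g⁻¹ = if χ = ψ then (Fintype.card G : ℂ) else 0 := by
  obtain ⟨V, hV, rfl⟩ := hχ
  obtain ⟨W, hW, rfl⟩ := hψ
  have hinv : Invertible (Nat.card G : ℂ) := invertibleOfNonzero (by simp)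
  have hc : (Nat.card G : ℂ) ≠ 0 := by simp
  have h := FDRep.char_orthonormal V W
  rw [inv_mul_eq_iff_eq_mul₀ hc] at h
  rw [h]
  have : Nonempty (V ≅ W) ↔ V.character = W.character := by
    constructor
    · rintro ⟨i⟩
      exact FDRep.char_iso i
    · intro e
      by_contra hn
      rw [if_neg hn, ← e, (FDRep.simple_iff_char_is_norm_one V).1 hV] at h
      simp at h
  rw [Nat.card_eq_fintype_card]
  simp [this]

theorem exists_combo {G : Type} [Group G] {θ : G → ℂ} (hθ : θ ∈ VC G) :
    ∃ c : (Irr G) →₀ ℤ, ∀ g, θ g = c.sum fun χ n => (n : ℂ) * χ.1 g := by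
  induction hθ using AddSubgroup.closure_induction with
  | mem x hx => exact ⟨Finsupp.single ⟨x, hx⟩ 1, fun g => by simp⟩
  | zero => exact ⟨0, fun g => by simp⟩
  | add x y _ _ hx hy =>
    obtain ⟨c, hc⟩ := hx
    obtain ⟨d, hd⟩ := hy
    refine ⟨c + d, fun g => ?_⟩
    rw [Finsupp.sum_add_index' (by simp) (by intros; push_cast; ring), Pi.add_apply, hc, hd]
  | neg x _ hx =>
    obtain ⟨c, hc⟩ := hx
    refine ⟨-c, fun g => ?_⟩
    rw [Finsupp.sum_neg_index (by simp), Pi.neg_apply, hc]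
    simp [Finsupp.sum]

/-- A virtual character of norm one is plus or minus an irreducible character. -/
theorem norm_one {G : Type} [Group G] [Fintype G] {θ : G → ℂ} (hθ : θ ∈ VC G)
    (h1 : ∑ g, θ g * θ g⁻¹ = Fintype.card G) :
    ∃ χ ∈ Irr G, ∃ s : ℤ, (s = 1 ∨ s = -1) ∧ ∀ g, θ g = s * χ g := by
  obtain ⟨c, hc⟩ := exists_combo hθ
  have hsq : ∑ χ ∈ c.support, (c χ) ^ 2 = 1 := by
    have : (Fintype.card G : ℂ) * ((∑ χ ∈ c.support, (c χ) ^ 2 : ℤ) : ℂ) = Fintype.card G := by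
      conv_rhs => rw [← h1]
      simp only [hc, Finsupp.sum]
      simp_rw [Finset.sum_mul_sum]
      rw [Finset.sum_comm]
      push_cast
      rw [Finset.mul_sum]
      refine Finset.sum_congr rfl fun χ hχ => ?_
      rw [Finset.sum_comm, Finset.sum_eq_single χ]
      · have := irr_orth χ.2 χ.2
        rw [if_pos rfl] at this
        rw [← this, Finset.sum_mul]
        refine Finset.sum_congr rfl fun g _ => by ring
      · intro ψ _ hne
        have := irr_orth χ.2 ψ.2
        rw [if_neg (fun e => hne (Subtype.ext e.symm))] at this
        calc _ = (c χ : ℂ) * c ψ * ∑ g, χ.1 g * ψ.1 g⁻¹ := by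
              rw [Finset.mul_sum]
              refine Finset.sum_congr rfl fun g _ => by ring
          _ = 0 := by rw [this, mul_zero]
      · intro h; exact absurd hχ h
    have hne : (Fintype.card G : ℂ) ≠ 0 := by simp
    exact_mod_cast mul_left_cancel₀ hne (this.trans (mul_one _).symm)
  have hpos : ∀ χ ∈ c.support, 1 ≤ (c χ) ^ 2 := fun χ hχ => by
    have := Finsupp.mem_support_iff.1 hχ
    have : 0 < (c χ) ^ 2 := by positivity
    omega
  have hcard : (c.support.card : ℤ) ≤ 1 := by
    rw [← hsq, Finset.card_eq_sum_ones]; push_cast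
    exact Finset.sum_le_sum hpos
  have hne : c.support.Nonempty := by
    by_contra h
    rw [Finset.not_nonempty_iff_eq_empty] at h
    rw [h] at hsq; simp at hsq
  obtain ⟨χ, hχ⟩ := Finset.card_eq_one.1 (le_antisymm (by exact_mod_cast hcard) hne.card_pos)
  rw [hχ, Finset.sum_singleton] at hsq
  refine ⟨χ.1, χ.2, c χ, by simpa using hsq, fun g => ?_⟩
  rw [hc, Finsupp.sum, hχ, Finset.sum_singleton]

/-- The congruence between values of characters at elements of `3`-power order and degrees. -/
theorem char_congr {G : Type} [Group G] (V : FDRep ℂ G) (x : G) (k : ℕ) (hx : x ^ 3 ^ k = 1)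
    (a : ℤ) (ha : V.character x = a) : (3 : ℤ) ∣ (Module.finrank ℂ V : ℤ) - a ^ 3 ^ k := by
  set f := V.ρ x with hf
  have hfp : f ^ 3 ^ k = 1 := by rw [hf, ← map_pow, hx, map_one]
  have hsplit : f.charpoly.Splits := IsAlgClosed.splits _
  have htr : (a : ℂ) = f.charpoly.roots.sum := by
    rw [← ha]
    exact Module.End.trace_eq_sum_roots_charpoly_of_splits hsplit
  have hroot : ∀ μ ∈ f.charpoly.roots, μ ^ 3 ^ k = 1 := by
    intro μ hμ
    have h1 := (Polynomial.mem_roots'.1 hμ).2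
    rw [← Module.End.hasEigenvalue_iff_isRoot_charpoly] at h1
    obtain ⟨v, hv⟩ := h1.exists_hasEigenvector
    have h2 := hv.pow_apply (3 ^ k)
    rw [hfp] at h2
    have : (μ ^ 3 ^ k - 1) • v = 0 := by
      rw [sub_smul, ← h2]; simp
    rcases smul_eq_zero.1 this with h | h
    · exact sub_eq_zero.1 h
    · exact absurd h hv.2
  have hcard : f.charpoly.roots.card = Module.finrank ℂ V := by
    rw [← hsplit.natDegree_eq_card_roots, LinearMap.charpoly_natDegree]
  -- the ring of algebraic integers
  let O := integralClosure ℤ ℂ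
  have hInt : ∀ μ ∈ f.charpoly.roots, IsIntegral ℤ μ := fun μ hμ =>
    IsIntegral.of_pow (n := 3 ^ k) (by positivity) (by rw [hroot μ hμ]; exact isIntegral_one)
  obtain ⟨s, hs⟩ : ∃ s : Multiset O, s.map (algebraMap O ℂ) = f.charpoly.roots := by
    refine ⟨f.charpoly.roots.attach.map fun μ => (⟨μ.1, hInt μ.1 μ.2⟩ : O), ?_⟩
    rw [Multiset.map_map]
    exact Multiset.attach_map_val _
  have hinj : Function.Injective (algebraMap O ℂ) := Subtype.val_injective
  have hsum : s.sum = (a : O) := by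
    apply hinj
    rw [map_multiset_sum, hs, ← htr]; simp
  have hpow : ∀ μ ∈ s, μ ^ 3 ^ k = 1 := by
    intro μ hμ
    apply hinj
    rw [map_pow, map_one]
    exact hroot _ (hs ▸ Multiset.mem_map_of_mem _ hμ)
  have hfr : ∀ t : Multiset O, (∀ μ ∈ t, μ ^ 3 ^ k = 1) →
      (3 : O) ∣ t.sum ^ 3 ^ k - (t.card : O) := by
    intro t
    induction t using Multiset.induction_on with
    | empty => intro _; simp
    | cons μ t ih =>
      intro h
      have h1 := ih fun ν hν => h ν (Multiset.mem_cons_of_mem hν)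
      have h2 := h μ (Multiset.mem_cons_self _ _)
      rw [Multiset.sum_cons, Multiset.card_cons]
      obtain ⟨r, hr⟩ := exists_add_pow_prime_pow_eq Nat.prime_three μ t.sum k
      rw [hr, h2]
      have : (1 + t.sum ^ 3 ^ k + ((3 : ℕ) : O) * μ * t.sum * r - ((t.card + 1 : ℕ) : O)) =
        (t.sum ^ 3 ^ k - (t.card : O)) + 3 * (μ * t.sum * r) := by push_cast; ring
      rw [this]
      exact dvd_add h1 (dvd_mul_right _ _)
  obtain ⟨r, hr⟩ := hfr s hpow
  have hc2 : s.card = Module.finrank ℂ V := by rw [← hcard, ← hs, Multiset.card_map]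
  rw [hsum, hc2] at hr
  have hr2 : (a : ℂ) ^ 3 ^ k - (Module.finrank ℂ V : ℂ) = 3 * r.1 := by
    have := congrArg (algebraMap O ℂ) hr
    rw [map_mul] at this
    simpa [show algebraMap O ℂ 3 = 3 from rfl] using this
  have hrint : IsIntegral ℤ r.1 := r.2
  have hrat : r.1 = algebraMap ℚ ℂ (((a : ℚ) ^ 3 ^ k - (Module.finrank ℂ V : ℚ)) / 3) := by
    simp [hr2]
  rw [hrat, isIntegral_algebraMap_iff (algebraMap ℚ ℂ).injective] at hrint
  obtain ⟨z, hz⟩ := IsIntegrallyClosed.isIntegral_iff.1 hrint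
  refine ⟨-z, ?_⟩
  have : (z : ℚ) * 3 = ((a : ℚ) ^ 3 ^ k - (Module.finrank ℂ V : ℚ)) := by
    have : (z : ℚ) = _ := hz
    rw [this]; ring
  have : z * 3 = a ^ 3 ^ k - (Module.finrank ℂ V : ℤ) := by exact_mod_cast this
  linarith

/-- The counting theorem. -/
theorem count {G : Type} [Group G] [Fintype G] (k : ℕ) (x : G) (hx : x ^ 3 ^ k = 1)
    {ι : Type} [Fintype ι] (θ : ι → G → ℤ)
    (hVC : ∀ i, (fun g => (θ i g : ℂ)) ∈ VC G)
    (hinv : ∀ i g, θ i g⁻¹ = θ i g)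
    (horth : ∀ i j, ∑ g, θ i g * θ j g = if i = j then (Fintype.card G : ℤ) else 0)
    (hval : ∀ i, θ i x = 1 ∨ θ i x = -1 ∨ θ i x = 2 ∨ θ i x = -2)
    (hsum : ((Finset.univ.filter fun h : G => h * x * h⁻¹ = x).card : ℤ) ≤ ∑ i, (θ i x) ^ 2) :
    Nonempty (ι ≃ IrrCoprime 3 G) := by
  have hN : ∀ i, ∃ χ ∈ Irr G, ∃ s : ℤ, (s = 1 ∨ s = -1) ∧ ∀ g, (θ i g : ℂ) = s * χ g := by
    intro i
    apply norm_one (hVC i)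
    simp_rw [hinv]
    have := horth i i
    rw [if_pos rfl] at this
    exact_mod_cast this
  choose χ hχ s hs hθ using hN
  have hχ' : ∀ i g, χ i g = s i * θ i g := by
    intro i g
    rcases hs i with h | h <;> simp [hθ, h]
  have hmem : ∀ i, χ i ∈ IrrCoprime 3 G := by
    intro i
    obtain ⟨V, hV, e⟩ := hχ i
    refine ⟨V, hV, e, ?_⟩
    have h1 := char_congr V x k hx (s i * θ i x) (by rw [e, hχ']; push_cast; rfl)
    rw [Nat.coprime_comm, Nat.Prime.coprime_iff_not_dvd Nat.prime_three]
    intro h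
    have h2 : (3 : ℤ) ∣ (s i * θ i x) ^ 3 ^ k := by
      have h3 : (3 : ℤ) ∣ (Module.finrank ℂ V : ℤ) := by exact_mod_cast h
      have := dvd_sub h3 h1
      simpa using this
    have h4 := Int.prime_three.dvd_of_dvd_pow h2
    rcases hs i with h | h <;> rcases hval i with h' | h' | h' | h' <;> rw [h, h'] at h4 <;>
      revert h4 <;> decide
  refine ⟨Equiv.ofBijective (fun i => ⟨χ i, hmem i⟩) ⟨?_, ?_⟩⟩
  · intro i j hij
    have e : χ i = χ j := congrArg Subtype.val hij
    by_contra hne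
    have h0 := horth i j
    rw [if_neg hne] at h0
    have : ∀ g, θ j g = (s j * s i) * θ i g := by
      intro g
      have : (θ j g : ℂ) = ((s j * s i) * θ i g : ℤ) := by
        rw [hθ, ← e, hχ']; push_cast; ring
      exact_mod_cast this
    have h1 := horth i i
    rw [if_pos rfl] at h1
    have h2 : ∑ g, θ i g * θ j g = (s j * s i) * ∑ g, θ i g * θ i g := by
      rw [Finset.mul_sum]
      refine Finset.sum_congr rfl fun g _ => by rw [this]; ring
    rw [h0, h1] at h2
    have : (Fintype.card G : ℤ) ≠ 0 := by simp
    rcases hs i with h | h <;> rcases hs j with h' | h' <;> rw [h, h'] at h2 <;> omega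
  · rintro ⟨ψ, V, hV, e, hcop⟩
    by_contra hno
    have hψ : ψ ∈ Irr G := ⟨V, hV, e⟩
    have hne : ∀ i, χ i ≠ ψ := fun i h => hno ⟨i, Subtype.ext h⟩
    -- the defect function
    let N : G → ℤ := fun g => ((Finset.univ.filter fun h : G => h * x * h⁻¹ = g).card : ℤ)
    let D : G → ℤ := fun g => N g - ∑ i, θ i x * θ i g
    have hconj : ∀ i g h, θ i (h * g * h⁻¹) = θ i g := by
      intro i g h
      have : χ i (h * g * h⁻¹) = χ i g := by
        obtain ⟨W, _, e⟩ := hχ i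
        rw [← e, FDRep.char_conj]
      have : (θ i (h * g * h⁻¹) : ℂ) = θ i g := by rw [hθ, hθ, this]
      exact_mod_cast this
    have hNsum : ∀ F : G → ℂ, (∀ h, F (h * x * h⁻¹) = F x) →
        ∑ g, (N g : ℂ) * F g = Fintype.card G * F x := by
      intro F hF
      simp only [N, Finset.card_filter]
      push_cast
      simp_rw [Finset.sum_mul]
      rw [Finset.sum_comm]
      simp [hF]
    have hNθ : ∀ i, ∑ g, N g * θ i g = Fintype.card G * θ i x := by
      intro i
      have := hNsum (fun g => θ i g) (fun h => by rw [hconj])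
      exact_mod_cast this
    have hDθ : ∀ i, ∑ g, D g * θ i g = 0 := by
      intro i
      simp only [D, sub_mul, Finset.sum_sub_distrib, hNθ, Finset.sum_mul]
      rw [Finset.sum_comm]
      have : ∀ j, ∑ g, θ j x * θ j g * θ i g = if j = i then θ j x * Fintype.card G else 0 := by
        intro j
        have := horth j i
        simp_rw [mul_assoc, ← Finset.mul_sum, this]
        split_ifs <;> simp
      simp_rw [this]
      simp [mul_comm]
    have hDconj : ∀ h, D (h * x * h⁻¹) = D x := by
      intro h
      simp only [D, hconj, N]
      congr 2
      apply Finset.card_bij (fun a _ => h⁻¹ * a)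
      · intro a ha
        simp only [Finset.mem_filter, Finset.mem_univ, true_and] at ha ⊢
        rw [mul_inv_rev, inv_inv]
        calc h⁻¹ * a * x * (a⁻¹ * h) = h⁻¹ * (a * x * a⁻¹) * h := by group
          _ = x := by rw [ha]; group
      · intro a _ b _ hab
        exact mul_left_cancel hab
      · intro b hb
        simp only [Finset.mem_filter, Finset.mem_univ, true_and] at hb
        refine ⟨h * b, ?_, by group⟩
        simp only [Finset.mem_filter, Finset.mem_univ, true_and]
        calc h * b * x * (h * b)⁻¹ = h * (b * x * b⁻¹) * h⁻¹ := by group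
          _ = _ := by rw [hb]
    have hDD : ∑ g, D g * D g = Fintype.card G * D x := by
      have h1 : ∑ g, N g * D g = Fintype.card G * D x := by
        have := hNsum (fun g => D g) (fun h => by rw [hDconj])
        exact_mod_cast this
      have h2 : ∀ g, D g * D g = N g * D g - ∑ i, θ i x * (D g * θ i g) := by
        intro g
        conv_lhs => enter [1]; simp only [D]
        rw [sub_mul, Finset.sum_mul]
        congr 1
        refine Finset.sum_congr rfl fun i _ => by ring
      simp_rw [h2]
      rw [Finset.sum_sub_distrib, h1, Finset.sum_comm]
      simp_rw [← Finset.mul_sum, hDθ]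
      simp
    have hDx : D x ≤ 0 := by
      have : ∑ i, θ i x * θ i x = ∑ i, (θ i x) ^ 2 :=
        Finset.sum_congr rfl fun i _ => by ring
      simp only [D, N, this]
      linarith
    have hD0 : ∀ g, D g = 0 := by
      have h1 : ∑ g, D g * D g ≤ 0 := by
        rw [hDD]
        exact mul_nonpos_of_nonneg_of_nonpos (by positivity) hDx
      have h2 : ∑ g, D g * D g = 0 :=
        le_antisymm h1 (Finset.sum_nonneg fun g _ => mul_self_nonneg _)
      rw [Finset.sum_eq_zero_iff_of_nonneg fun g _ => mul_self_nonneg _] at h2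
      intro g
      exact mul_self_eq_zero.1 (h2 g (Finset.mem_univ g))
    have hψ0 : V.character x⁻¹ = 0 := by
      have h1 := hNsum (fun g => ψ g⁻¹) (fun h => by
        rw [← e, ← FDRep.char_conj V x⁻¹ h]; congr 1; group)
      have h2 : ∀ g, (N g : ℂ) = ∑ i, (θ i x : ℂ) * θ i g := by
        intro g
        have : N g = ∑ i, θ i x * θ i g := by
          have := hD0 g; simp only [D] at this; linarith
        rw [this]; push_cast; rfl
      simp_rw [h2, Finset.sum_mul] at h1
      rw [Finset.sum_comm] at h1
      have h3 : ∀ i, ∑ g, (θ i x : ℂ) * θ i g * ψ g⁻¹ = 0 := by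
        intro i
        have := irr_orth (hχ i) hψ
        rw [if_neg (hne i)] at this
        calc _ = (θ i x : ℂ) * s i * ∑ g, χ i g * ψ g⁻¹ := by
              rw [Finset.mul_sum]
              refine Finset.sum_congr rfl fun g _ => by rw [hθ i g]; ring
          _ = 0 := by rw [this, mul_zero]
      simp_rw [h3] at h1
      rw [e]
      have hc : (Fintype.card G : ℂ) ≠ 0 := by simp
      simpa using h1.symm
    have h1 := char_congr V x⁻¹ k (by rw [inv_pow, hx, inv_one]) 0 (by rw [hψ0]; simp)
    rw [zero_pow (by positivity), sub_zero] at h1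
    rw [Nat.coprime_comm, Nat.Prime.coprime_iff_not_dvd Nat.prime_three] at hcop
    exact hcop (by exact_mod_cast h1)

end GB
namespace GB

/-- Number of points with a given colour. -/
def cnt {α T : Type} [Fintype α] (f : α → T) (t : T) : ℕ :=
  (Finset.univ.filter fun a => f a = t).card

theorem cnt_comp {α T : Type} [Fintype α] (f : α → T) (σ : Equiv.Perm α) :
    cnt (fun a => f (σ a)) = cnt f := by
  ext t
  unfold cnt
  apply Finset.card_bij (fun a _ => σ a)
  · intro a ha; simpa using ha
  · intro a _ b _ h; exact σ.injective h
  · intro b hb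
    exact ⟨σ.symm b, by simpa using hb, by simp⟩

theorem exists_perm_of_cnt {α T : Type} [Fintype α] (f g : α → T) (h : cnt f = cnt g) :
    ∃ τ : Equiv.Perm α, ∀ a, g (τ a) = f a := by
  have e : ∀ t, Nonempty ({a // f a = t} ≃ {a // g a = t}) := by
    intro t
    refine ⟨Fintype.equivOfCardEq ?_⟩
    have := congrFun h t
    rw [Fintype.card_subtype, Fintype.card_subtype]
    exact this
  refine ⟨Equiv.ofFiberEquiv (f := f) (g := g) (fun t => (e t).some), fun a => ?_⟩
  exact Equiv.ofFiberEquiv_map _ a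

theorem exists_cnt {α T : Type} [Fintype α] [Fintype T] (A : T → ℕ)
    (hA : ∑ t, A t = Fintype.card α) : ∃ f : α → T, cnt f = A := by
  have e : α ≃ Σ t, Fin (A t) := Fintype.equivOfCardEq (by simp [hA])
  refine ⟨fun a => (e a).1, ?_⟩
  ext t
  unfold cnt
  have : (Finset.univ.filter fun a => (e a).1 = t).card =
      (Finset.univ.filter fun s : (Σ t, Fin (A t)) => s.1 = t).card := by
    apply Finset.card_bij (fun a _ => e a)
    · intro a ha; simpa using ha
    · intro a _ b _ h; exact e.injective h
    · intro b hb; exact ⟨e.symm b, by simpa using hb, by simp⟩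
  rw [this, Finset.card_filter, Fintype.sum_sigma]
  simp [apply_ite Finset.card]

theorem sum_cnt {α T : Type} [Fintype α] [Fintype T] (f : α → T) :
    ∑ t, cnt f t = Fintype.card α := by
  unfold cnt
  rw [← Finset.card_eq_sum_card_fiberwise (s := Finset.univ) (t := Finset.univ) (f := f)
    (fun _ _ => by simp)]
  simp

theorem stab_sum {α T : Type} [Fintype α] [Fintype T] (A : T → ℕ)
    (hA : ∑ t, A t = Fintype.card α) :
    ∑ F ∈ Finset.univ.filter (fun F : α → T => cnt F = A),
      (Finset.univ.filter fun σ : Equiv.Perm α => ∀ a, F (σ a) = F a).card =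
      Fintype.card (Equiv.Perm α) := by
  obtain ⟨F0, hF0⟩ := exists_cnt A hA
  have h1 : ∀ F ∈ Finset.univ.filter (fun F : α → T => cnt F = A),
      (Finset.univ.filter fun σ : Equiv.Perm α => ∀ a, F (σ a) = F a).card =
      (Finset.univ.filter fun σ : Equiv.Perm α => (fun a => F0 (σ a)) = F).card := by
    intro F hF
    have hF : cnt F = A := by simpa using hF
    obtain ⟨τ, hτ⟩ := exists_perm_of_cnt F F0 (hF.trans hF0.symm)
    apply Finset.card_bij (fun σ _ => τ * σ)
    · intro σ hσ
      simp only [Finset.mem_filter, Finset.mem_univ, true_and] at hσ ⊢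
      ext a
      rw [Equiv.Perm.mul_apply, hτ, hσ]
    · intro a _ b _ h; exact mul_left_cancel h
    · intro σ hσ
      simp only [Finset.mem_filter, Finset.mem_univ, true_and] at hσ
      refine ⟨τ⁻¹ * σ, ?_, by group⟩
      simp only [Finset.mem_filter, Finset.mem_univ, true_and]
      intro a
      rw [← hτ, ← Equiv.Perm.mul_apply, mul_inv_cancel_left]
      exact congrFun hσ a
  rw [Finset.sum_congr rfl h1, ← Finset.card_eq_sum_card_fiberwise (f := fun σ : Equiv.Perm α =>
    (fun a => F0 (σ a)))]
  · simp
  · intro σ _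
    simp [cnt_comp, hF0]

/-- Burnside type lemma. -/
theorem burnside {α T : Type} [Fintype α] [Fintype T] (Φ : (T → ℕ) → ℤ) :
    ∑ σ : Equiv.Perm α, ∑ F : α → T, (if ∀ a, F (σ a) = F a then Φ (cnt F) else 0) =
      Fintype.card (Equiv.Perm α) *
        ∑ A ∈ Finset.piAntidiag Finset.univ (Fintype.card α), Φ A := by
  rw [Finset.sum_comm]
  have h1 : ∀ F : α → T, ∑ σ : Equiv.Perm α, (if ∀ a, F (σ a) = F a then Φ (cnt F) else 0) =
      ((Finset.univ.filter fun σ : Equiv.Perm α => ∀ a, F (σ a) = F a).card : ℤ) * Φ (cnt F) := by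
    intro F
    rw [← Finset.sum_filter, Finset.sum_const, nsmul_eq_mul]
  simp_rw [h1]
  rw [← Finset.sum_fiberwise_of_maps_to (s := Finset.univ) (g := fun F : α → T => cnt F)
    (t := Finset.piAntidiag Finset.univ (Fintype.card α))]
  · rw [Finset.mul_sum]
    refine Finset.sum_congr rfl fun A hA => ?_
    rw [Finset.mem_piAntidiag] at hA
    rw [← stab_sum A hA.1]
    push_cast
    rw [Finset.sum_mul]
    refine Finset.sum_congr rfl fun F hF => ?_
    have hF : cnt F = A := by simpa using hF
    rw [hF]
  · intro F _
    rw [Finset.mem_piAntidiag]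
    exact ⟨sum_cnt F, by simp⟩

end GB
namespace GB
open Matrix Polynomial

theorem cauchy_field {K : Type*} [Field K] {N : ℕ} (x y : Fin N → K) (hy : ∀ i, y i ≠ 0)
    (hinj : Function.Injective y) :
    (Matrix.of fun i j => ∏ l ∈ ({j}ᶜ : Finset (Fin N)), (1 - x i * y l)).det =
      (vandermonde x).det * (vandermonde y).det := by
  let P : Fin N → K[X] := fun j => ∏ l ∈ ({j}ᶜ : Finset (Fin N)), (1 - X * C (y l))
  let Cm : Matrix (Fin N) (Fin N) K := Matrix.of fun k j => (P j).coeff k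
  have hdeg : ∀ j, (P j).natDegree < N := by
    intro j
    have h1 : (P j).natDegree ≤ ∑ l ∈ ({j}ᶜ : Finset (Fin N)), 1 := by
      refine (natDegree_prod_le _ _).trans (Finset.sum_le_sum fun l _ => ?_)
      refine (natDegree_sub_le _ _).trans ?_
      simp only [natDegree_one, zero_le, sup_of_le_right]
      exact (natDegree_mul_C_le _ _).trans natDegree_X_le
    have hN : 0 < N := j.pos
    simp [Finset.card_compl] at h1
    omega
  have hmul : ∀ z : Fin N → K, (Matrix.of fun i j => ∏ l ∈ ({j}ᶜ : Finset (Fin N)),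
      (1 - z i * y l)) = vandermonde z * Cm := by
    intro z
    ext i j
    have : (P j).eval (z i) = ∏ l ∈ ({j}ᶜ : Finset (Fin N)), (1 - z i * y l) := by
      simp only [P, eval_prod, eval_sub, eval_one, eval_mul, eval_X, eval_C]
    rw [Matrix.of_apply, ← this, eval_eq_sum_range' (hdeg j), Matrix.mul_apply,
      Finset.sum_range]
    refine Finset.sum_congr rfl fun k _ => ?_
    simp [Cm, vandermonde_apply, mul_comm]
  rw [hmul, det_mul]
  congr 1
  -- evaluate at the inverses
  have h1 := congrArg Matrix.det (hmul (fun i => (y i)⁻¹))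
  rw [det_mul] at h1
  have h2 : (Matrix.of fun i j => ∏ l ∈ ({j}ᶜ : Finset (Fin N)), (1 - (y i)⁻¹ * y l)) =
      Matrix.diagonal fun j => ∏ l ∈ ({j}ᶜ : Finset (Fin N)), (1 - (y j)⁻¹ * y l) := by
    ext i j
    by_cases h : i = j
    · subst h; simp
    · rw [Matrix.diagonal_apply_ne _ h, Matrix.of_apply]
      apply Finset.prod_eq_zero (i := i) (by simpa using h)
      simp [hy]
  rw [h2, det_diagonal] at h1
  have hv : (vandermonde (fun i => (y i)⁻¹)).det ≠ 0 := by
    rw [det_vandermonde_ne_zero_iff]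
    exact inv_injective.comp hinj
  apply mul_left_cancel₀ hv
  rw [← h1, det_vandermonde, det_vandermonde]
  rw [← Finset.prod_mul_distrib]
  simp_rw [← Finset.prod_mul_distrib]
  have h3 := Finset.prod_prod_Ioi_mul_eq_prod_prod_off_diag (fun i j : Fin N => 1 - (y j)⁻¹ * y i)
  rw [← h3]
  refine Finset.prod_congr rfl fun i _ => Finset.prod_congr rfl fun j _ => ?_
  have := hy i
  have := hy j
  field_simp

theorem cauchy_domain {R : Type*} [CommRing R] [IsDomain R] {N : ℕ} (x y : Fin N → R)
    (hy : ∀ i, y i ≠ 0) (hinj : Function.Injective y) :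
    (Matrix.of fun i j => ∏ l ∈ ({j}ᶜ : Finset (Fin N)), (1 - x i * y l)).det =
      (vandermonde x).det * (vandermonde y).det := by
  have hi := IsFractionRing.injective R (FractionRing R)
  apply hi
  have := cauchy_field (K := FractionRing R) (fun i => algebraMap R _ (x i))
    (fun i => algebraMap R _ (y i)) (fun i h => hy i (hi (by simpa using h))) (hi.comp hinj)
  rw [map_mul, RingHom.map_det, RingHom.map_det, RingHom.map_det]
  have e : ∀ v : Fin N → R, (algebraMap R (FractionRing R)).mapMatrix (vandermonde v) =
      vandermonde (fun i => algebraMap R (FractionRing R) (v i)) := by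
    intro v; ext i j; simp [vandermonde_apply]
  rw [e, e, ← this]
  congr 1
  ext i j
  simp [map_prod]

end GB
namespace GB
open MvPowerSeries

/-- The geometric series of a monomial. -/
def geom {σ : Type} (e : σ →₀ ℕ) : MvPowerSeries σ ℤ :=
  fun d => if ∃ k : ℕ, d = k • e then 1 else 0

theorem coeff_geom {σ : Type} (e d : σ →₀ ℕ) :
    coeff d (geom e) = if ∃ k : ℕ, d = k • e then 1 else 0 := rfl

theorem geom_mul {σ : Type} (e : σ →₀ ℕ) (he : e ≠ 0) :
    (1 - monomial e (1 : ℤ)) * geom e = 1 := by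
  ext d
  rw [sub_mul, one_mul, map_sub, coeff_monomial_mul, coeff_one, coeff_geom]
  by_cases h : ∃ k : ℕ, d = k • e
  · rw [if_pos h]
    obtain ⟨k, rfl⟩ := h
    cases k with
    | zero =>
      have : ¬ e ≤ 0 := fun h => he (le_antisymm h (by simp))
      simp [this]
    | succ k =>
      have h1 : e ≤ (k + 1) • e := by rw [add_smul, one_smul]; exact le_add_self
      have h2 : (k + 1) • e - e = k • e := by rw [add_smul, one_smul]; simp
      have h3 : (k + 1) • e ≠ 0 := by
        intro h; rw [h] at h1; exact he (le_antisymm h1 (by simp))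
      rw [if_pos h1, h2, if_neg h3, coeff_geom, if_pos ⟨k, rfl⟩]; simp
  · rw [if_neg h]
    have h0 : d ≠ 0 := fun h0 => h ⟨0, by simp [h0]⟩
    rw [if_neg h0]
    split_ifs with h1
    · rw [coeff_geom, if_neg]; · simp
      rintro ⟨k, hk⟩
      apply h
      refine ⟨k + 1, ?_⟩
      rw [add_smul, one_smul, ← hk, tsub_add_cancel_of_le h1]
    · simp

theorem coeff_prod_geom {σ S : Type} [Fintype S] (e : S → σ →₀ ℕ) (he : ∀ s, e s ≠ 0)
    (D : σ →₀ ℕ) (n : ℕ) (hn : ∀ A : S → ℕ, ∑ s, A s • e s = D → ∑ s, A s = n) :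
    coeff D (∏ s, geom (e s)) =
      ∑ A ∈ Finset.piAntidiag Finset.univ n, if ∑ s, A s • e s = D then (1 : ℤ) else 0 := by
  rw [coeff_prod]
  have h1 : ∀ l : S →₀ (σ →₀ ℕ), ∏ i, coeff (l i) (geom (e i)) =
      if ∀ i, ∃ k : ℕ, l i = k • e i then (1 : ℤ) else 0 := by
    intro l
    simp_rw [coeff_geom]
    split_ifs with h
    · exact Finset.prod_eq_one fun i _ => if_pos (h i)
    · push Not at h
      obtain ⟨i, hi⟩ := h
      exact Finset.prod_eq_zero (Finset.mem_univ i) (if_neg (by simpa using hi))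
  simp_rw [h1]
  rw [Finset.sum_boole, Finset.sum_boole]
  congr 1
  symm
  apply Finset.card_bij (fun A _ => Finsupp.equivFunOnFinite.symm fun s => A s • e s)
  · intro A hA
    simp only [Finset.mem_filter, Finset.mem_piAntidiag] at hA
    simp only [Finset.mem_filter, Finset.mem_finsuppAntidiag]
    refine ⟨⟨?_, by simp⟩, fun i => ⟨A i, by simp⟩⟩
    simpa using hA.2
  · intro A _ B _ h
    ext s
    have := DFunLike.congr_fun h s
    simp only [Finsupp.equivFunOnFinite_symm_apply_apply] at this
    by_contra hne
    obtain ⟨t, ht⟩ : ∃ t, e s t ≠ 0 := by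
      by_contra hc
      push Not at hc
      exact he s (by ext t; simpa using hc t)
    have := DFunLike.congr_fun this t
    simp only [Finsupp.smul_apply, smul_eq_mul] at this
    exact hne (Nat.eq_of_mul_eq_mul_right (Nat.pos_of_ne_zero ht) this)
  · intro l hl
    simp only [Finset.mem_filter, Finset.mem_finsuppAntidiag] at hl
    obtain ⟨⟨h2, -⟩, h3⟩ := hl
    choose A hA using h3
    have h4 : ∑ s, A s • e s = D := by
      rw [← h2]; exact Finset.sum_congr rfl fun i _ => (hA i).symm
    refine ⟨A, ?_, ?_⟩
    · simp only [Finset.mem_filter, Finset.mem_piAntidiag]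
      exact ⟨⟨hn A h4, by simp⟩, h4⟩
    · ext1 s
      simp [hA]

end GB
namespace GB
open MvPowerSeries

/-- Exponent vector with two blocks. -/
def ev {N : ℕ} (f g : Fin N → ℕ) : (Fin N ⊕ Fin N) →₀ ℕ :=
  Finsupp.equivFunOnFinite.symm (Sum.elim f g)

@[simp] theorem ev_inl {N : ℕ} (f g : Fin N → ℕ) (i : Fin N) : ev f g (Sum.inl i) = f i := rfl
@[simp] theorem ev_inr {N : ℕ} (f g : Fin N → ℕ) (i : Fin N) : ev f g (Sum.inr i) = g i := rfl

theorem ev_ext {N : ℕ} {D E : (Fin N ⊕ Fin N) →₀ ℕ} :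
    D = E ↔ (∀ i, D (Sum.inl i) = E (Sum.inl i)) ∧ (∀ i, D (Sum.inr i) = E (Sum.inr i)) := by
  constructor
  · rintro rfl; simp
  · rintro ⟨h1, h2⟩
    ext s
    cases s with
    | inl i => exact h1 i
    | inr i => exact h2 i

/-- Exponent of `x_i y_j`. -/
def eij {N : ℕ} (p : Fin N × Fin N) : (Fin N ⊕ Fin N) →₀ ℕ :=
  Finsupp.single (Sum.inl p.1) 1 + Finsupp.single (Sum.inr p.2) 1

theorem eij_ne {N : ℕ} (p : Fin N × Fin N) : eij p ≠ 0 := by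
  intro h
  have := DFunLike.congr_fun h (Sum.inl p.1)
  simp [eij] at this

theorem eij_inl {N : ℕ} (p : Fin N × Fin N) (i : Fin N) :
    eij p (Sum.inl i) = if p.1 = i then 1 else 0 := by
  simp [eij, Finsupp.single_apply]

theorem eij_inr {N : ℕ} (p : Fin N × Fin N) (i : Fin N) :
    eij p (Sum.inr i) = if p.2 = i then 1 else 0 := by
  simp [eij, Finsupp.single_apply]

theorem X_mul_X {N : ℕ} (i j : Fin N) :
    (X (Sum.inl i) * X (Sum.inr j) : MvPowerSeries (Fin N ⊕ Fin N) ℤ) =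
      monomial (eij (i, j)) 1 := by
  rw [X, X, monomial_mul_monomial, mul_one]; rfl

theorem sum_inl {N : ℕ} (A : Fin N × Fin N → ℕ) (i : Fin N) :
    (∑ s, A s • eij s) (Sum.inl i) = ∑ j, A (i, j) := by
  rw [Finsupp.finsetSum_apply, Fintype.sum_prod_type]
  simp only [Finsupp.smul_apply, eij_inl, smul_eq_mul, mul_ite, mul_one, mul_zero]
  rw [Finset.sum_eq_single i] <;> simp +contextual

theorem sum_inr {N : ℕ} (A : Fin N × Fin N → ℕ) (j : Fin N) :
    (∑ s, A s • eij s) (Sum.inr j) = ∑ i, A (i, j) := by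
  rw [Finsupp.finsetSum_apply, Fintype.sum_prod_type]
  simp only [Finsupp.smul_apply, eij_inr, smul_eq_mul, mul_ite, mul_one, mul_zero]
  simp

theorem prod_X_pow {N : ℕ} (f g : Fin N → ℕ) :
    ((∏ i, X (Sum.inl i) ^ f i) * ∏ i, X (Sum.inr i) ^ g i : MvPowerSeries (Fin N ⊕ Fin N) ℤ) =
      monomial (ev f g) 1 := by
  simp_rw [X_pow_eq]
  have h : ∀ (S : Finset (Fin N)) (F : Fin N → (Fin N ⊕ Fin N) →₀ ℕ),
      (∏ i ∈ S, monomial (F i) (1 : ℤ)) = monomial (∑ i ∈ S, F i) 1 := by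
    intro S F
    induction S using Finset.induction_on with
    | empty => simp
    | insert a S ha ih =>
      rw [Finset.prod_insert ha, ih, Finset.sum_insert ha, monomial_mul_monomial, mul_one]
  rw [h, h, monomial_mul_monomial, mul_one]
  congr 2
  rw [ev_ext]
  constructor
  · intro i
    simp [Finsupp.single_apply]
  · intro i
    simp [Finsupp.single_apply]

theorem coeff_perm {N : ℕ} (β γ : Fin N → ℕ) (w : Equiv.Perm (Fin N)) :
    coeff (ev β γ) (∏ i, geom (eij (w i, i))) = if ∀ i, β (w i) = γ i then (1 : ℤ) else 0 := by
  have key : ∀ A : Fin N → ℕ, ∑ s, A s • eij (w s, s) = ev β γ ↔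
      (∀ i, A i = β (w i)) ∧ (∀ i, A i = γ i) := by
    intro A
    rw [ev_ext]
    have h1 : ∀ i, (∑ s, A s • eij (w s, s)) (Sum.inl (w i)) = A i := by
      intro i
      rw [Finsupp.finsetSum_apply]
      simp [eij_inl]
    have h2 : ∀ i, (∑ s, A s • eij (w s, s)) (Sum.inr i) = A i := by
      intro i
      rw [Finsupp.finsetSum_apply]
      simp [eij_inr]
    apply and_congr
    · rw [← w.forall_congr_right (q := fun i => (∑ s, A s • eij (w s, s)) (Sum.inl i) = _)]
      simp only [h1, ev_inl]
    · simp only [h2, ev_inr]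
  rw [coeff_prod_geom (fun i => eij (w i, i)) (fun i => eij_ne _) _ (∑ i, γ i)]
  · simp_rw [key]
    split_ifs with h
    · rw [Finset.sum_eq_single γ]
      · simp [h]
      · intro A _ hA
        rw [if_neg]
        rintro ⟨-, h2⟩
        exact hA (funext h2)
      · intro h; exact absurd (by simp [Finset.mem_piAntidiag]) h
    · apply Finset.sum_eq_zero
      intro A _
      rw [if_neg]
      rintro ⟨h1, h2⟩
      exact h fun i => (h1 i).symm.trans (h2 i)
  · intro A hA
    rw [key] at hA
    exact Finset.sum_congr rfl fun i _ => hA.2 i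

theorem X_coeff {N : ℕ} (s t : Fin N ⊕ Fin N) :
    coeff (Finsupp.single s 1) (X t : MvPowerSeries (Fin N ⊕ Fin N) ℤ) =
      if s = t then 1 else 0 := by
  rw [coeff_X]
  simp [Finsupp.single_left_inj]

theorem cauchy_series (N : ℕ) :
    (∑ w : Equiv.Perm (Fin N), ∑ v : Equiv.Perm (Fin N),
      ((Equiv.Perm.sign w : ℤ) * (Equiv.Perm.sign v : ℤ)) •
        (monomial (ev (fun i => (w i : ℕ)) (fun i => (v i : ℕ))) (1 : ℤ) * ∏ p, geom (eij p))) =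
    ∑ w : Equiv.Perm (Fin N), (Equiv.Perm.sign w : ℤ) • ∏ i, geom (eij (w i, i)) := by
  have : IsDomain (MvPowerSeries (Fin N ⊕ Fin N) ℤ) := NoZeroDivisors.to_isDomain _
  have hc := cauchy_domain (R := MvPowerSeries (Fin N ⊕ Fin N) ℤ)
    (fun i => X (Sum.inl i)) (fun i => X (Sum.inr i)) 
    (fun i h => by
      have h := congrArg (coeff (Finsupp.single (Sum.inr i) 1)) h
      rw [X_coeff] at h
      simp at h)
    (fun i j h => by
      have h : X (Sum.inr i) = X (Sum.inr j) := h
      have h := congrArg (coeff (Finsupp.single (Sum.inr i) 1)) h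
      rw [X_coeff, X_coeff] at h
      by_contra hne
      simp [hne] at h)
  have hV : ∀ z : Fin N → MvPowerSeries (Fin N ⊕ Fin N) ℤ, (Matrix.vandermonde z).det =
      ∑ w : Equiv.Perm (Fin N), (Equiv.Perm.sign w : ℤ) • ∏ i, z i ^ (w i : ℕ) := by
    intro z
    rw [← Matrix.det_transpose, Matrix.det_apply]
    rfl
  have hL : ∀ w v : Equiv.Perm (Fin N), monomial (ev (fun i => (w i : ℕ)) (fun i => (v i : ℕ))) (1 : ℤ)
      = (∏ i, X (Sum.inl i) ^ (w i : ℕ)) * ∏ i, X (Sum.inr i) ^ (v i : ℕ) :=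
    fun w v => (prod_X_pow _ _).symm
  have h1 : (∑ w : Equiv.Perm (Fin N), ∑ v : Equiv.Perm (Fin N),
      ((Equiv.Perm.sign w : ℤ) * (Equiv.Perm.sign v : ℤ)) •
        (monomial (ev (fun i => (w i : ℕ)) (fun i => (v i : ℕ))) (1 : ℤ) * ∏ p, geom (eij p))) =
      ((Matrix.vandermonde fun i : Fin N => (X (Sum.inl i) : MvPowerSeries (Fin N ⊕ Fin N) ℤ)).det *
      (Matrix.vandermonde fun i : Fin N => (X (Sum.inr i) : MvPowerSeries (Fin N ⊕ Fin N) ℤ)).det) *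
        ∏ p, geom (eij p) := by
    rw [hV, hV, Finset.sum_mul_sum, Finset.sum_mul]
    refine Finset.sum_congr rfl fun w _ => ?_
    rw [Finset.sum_mul]
    refine Finset.sum_congr rfl fun v _ => ?_
    rw [hL]
    simp only [smul_mul_assoc, mul_smul_comm, smul_smul]
    rw [mul_comm (Equiv.Perm.sign w : ℤ)]
  rw [h1, ← hc, Matrix.det_apply, Finset.sum_mul]
  refine Finset.sum_congr rfl fun w _ => ?_
  rw [Units.smul_def, smul_mul_assoc]
  congr 1
  have h2 : ∏ p, geom (eij p) = ∏ i : Fin N, ∏ l : Fin N, geom (eij (w i, l)) := by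
    rw [Fintype.prod_prod_type]
    exact (Equiv.prod_comp w (fun i => ∏ l : Fin N, geom (eij (i, l)))).symm
  rw [h2, ← Finset.prod_mul_distrib]
  refine Finset.prod_congr rfl fun i _ => ?_
  rw [Matrix.of_apply, ← Finset.mul_prod_erase Finset.univ _ (Finset.mem_univ i),
    ← Finset.compl_singleton, mul_left_comm, ← Finset.prod_mul_distrib]
  rw [Finset.prod_eq_one, mul_one]
  intro l _
  rw [X_mul_X, geom_mul _ (eij_ne _)]

theorem cauchy_count {N : ℕ} (n : ℕ) (β γ : Fin N → ℕ)
    (hβ : ∑ i, β i = n + ∑ i : Fin N, (i : ℕ)) :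
    ∑ w : Equiv.Perm (Fin N), ∑ v : Equiv.Perm (Fin N),
      ∑ A ∈ Finset.piAntidiag (Finset.univ : Finset (Fin N × Fin N)) n,
      (if ∀ i, ∑ j, A (i, j) + (w i : ℕ) = β i then (Equiv.Perm.sign w : ℤ) else 0) *
      (if ∀ j, ∑ i, A (i, j) + (v j : ℕ) = γ j then (Equiv.Perm.sign v : ℤ) else 0) =
    ∑ w : Equiv.Perm (Fin N), if ∀ i, β (w i) = γ i then (Equiv.Perm.sign w : ℤ) else 0 := by
  have h := congrArg (coeff (ev β γ)) (cauchy_series N)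
  simp only [map_sum, map_zsmul, coeff_perm, coeff_monomial_mul, one_mul] at h
  have hr : ∀ w : Equiv.Perm (Fin N), (if ∀ i, β (w i) = γ i then (Equiv.Perm.sign w : ℤ) else 0) =
    (Equiv.Perm.sign w : ℤ) • (if ∀ i, β (w i) = γ i then (1 : ℤ) else 0) := by
    intro w; simp
  simp_rw [hr]
  rw [← h]
  refine Finset.sum_congr rfl fun w _ => Finset.sum_congr rfl fun v _ => ?_
  have hterm : ∀ A : Fin N × Fin N → ℕ,
      (if ∀ i, ∑ j, A (i, j) + (w i : ℕ) = β i then (Equiv.Perm.sign w : ℤ) else 0) *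
      (if ∀ j, ∑ i, A (i, j) + (v j : ℕ) = γ j then (Equiv.Perm.sign v : ℤ) else 0) =
      ((Equiv.Perm.sign w : ℤ) * (Equiv.Perm.sign v : ℤ)) *
      (if (∀ i, ∑ j, A (i, j) + (w i : ℕ) = β i) ∧ (∀ j, ∑ i, A (i, j) + (v j : ℕ) = γ j)
        then 1 else 0) := by
    intro A
    by_cases h1 : ∀ i, ∑ j, A (i, j) + (w i : ℕ) = β i
    · by_cases h2 : ∀ j, ∑ i, A (i, j) + (v j : ℕ) = γ j
      · rw [if_pos h1, if_pos h2, if_pos ⟨h1, h2⟩, mul_one]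
      · have h3 : ¬ ((∀ i, ∑ j, A (i, j) + (w i : ℕ) = β i) ∧
          (∀ j, ∑ i, A (i, j) + (v j : ℕ) = γ j)) := fun h => h2 h.2
        rw [if_neg h2, if_neg h3, mul_zero, mul_zero]
    · have h3 : ¬ ((∀ i, ∑ j, A (i, j) + (w i : ℕ) = β i) ∧
          (∀ j, ∑ i, A (i, j) + (v j : ℕ) = γ j)) := fun h => h1 h.1
      rw [if_neg h1, if_neg h3, zero_mul, mul_zero]
  simp_rw [hterm]
  rw [← Finset.mul_sum, smul_eq_mul]
  congr 1
  split_ifs with hle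
  · have key : ∀ A : Fin N × Fin N → ℕ, ∑ s, A s • eij s = ev β γ -
        ev (fun i => (w i : ℕ)) (fun i => (v i : ℕ)) ↔
        (∀ i, ∑ j, A (i, j) + (w i : ℕ) = β i) ∧ (∀ j, ∑ i, A (i, j) + (v j : ℕ) = γ j) := by
      intro A
      rw [ev_ext]
      simp only [sum_inl, sum_inr, Finsupp.tsub_apply, ev_inl, ev_inr]
      apply and_congr
      · refine forall_congr' fun i => ?_
        have : (w i : ℕ) ≤ β i := hle (Sum.inl i)
        omega
      · refine forall_congr' fun i => ?_
        have : (v i : ℕ) ≤ γ i := hle (Sum.inr i)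
        omega
    rw [coeff_prod_geom _ eij_ne _ n]
    · simp_rw [key]
      congr!
    · intro A hA
      have h3 := ((key A).1 hA).1
      have h4 : ∑ i, (∑ j, A (i, j) + (w i : ℕ)) = ∑ i, β i := Finset.sum_congr rfl fun i _ => h3 i
      rw [Finset.sum_add_distrib, Equiv.sum_comp w (fun i : Fin N => (i : ℕ)), hβ] at h4
      rw [Fintype.sum_prod_type]
      omega
  · apply Finset.sum_eq_zero
    intro A _
    rw [if_neg]
    rintro ⟨h1, h2⟩
    apply hle
    intro s
    cases s with
    | inl i => exact (Nat.le_add_left _ _).trans (h1 i).le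
    | inr i => exact (Nat.le_add_left _ _).trans (h2 i).le

end GB
namespace GB

theorem ite_iff {p q : Prop} {_ : Decidable p} {_ : Decidable q} (h : p ↔ q) (a b : ℤ) :
    (if p then a else b) = if q then a else b := if_congr h rfl rfl

/-- The signed indicator used in the determinantal formula. -/
def uu {N : ℕ} (β : Fin N → ℕ) (w : Equiv.Perm (Fin N)) (c : Fin N → ℕ) : ℤ :=
  if ∀ i, c i + (w i : ℕ) = β i then (Equiv.Perm.sign w : ℤ) else 0

/-- The determinantal virtual character of a symmetric group. -/
def om {α : Type} [Fintype α] {N : ℕ} (β : Fin N → ℕ) (σ : Equiv.Perm α) : ℤ :=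
  ∑ w : Equiv.Perm (Fin N), ∑ f : α → Fin N, if ∀ a, f (σ a) = f a then uu β w (cnt f) else 0

theorem fix_inv {α T : Type} (σ : Equiv.Perm α) (f : α → T) :
    (∀ a, f (σ⁻¹ a) = f a) ↔ (∀ a, f (σ a) = f a) := by
  constructor
  · intro h a
    have := h (σ a)
    simpa using this.symm
  · intro h a
    have := h (σ⁻¹ a)
    simpa using this.symm

theorem om_inv {α : Type} [Fintype α] {N : ℕ} (β : Fin N → ℕ) (σ : Equiv.Perm α) :
    om β σ⁻¹ = om β σ := by
  unfold om
  simp_rw [fix_inv]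

theorem cnt_fst {α A B : Type} [Fintype α] [Fintype A] [Fintype B] (F : α → A × B) (i : A) :
    cnt (fun a => (F a).1) i = ∑ j, cnt F (i, j) := by
  unfold cnt
  rw [Finset.card_eq_sum_card_fiberwise (f := fun a => (F a).2) (t := Finset.univ)
    (fun _ _ => by simp)]
  refine Finset.sum_congr rfl fun j _ => ?_
  rw [Finset.filter_filter]
  congr 1
  ext a
  simp [Prod.ext_iff]

theorem cnt_snd {α A B : Type} [Fintype α] [Fintype A] [Fintype B] (F : α → A × B) (j : B) :
    cnt (fun a => (F a).2) j = ∑ i, cnt F (i, j) := by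
  unfold cnt
  rw [Finset.card_eq_sum_card_fiberwise (f := fun a => (F a).1) (t := Finset.univ)
    (fun _ _ => by simp)]
  refine Finset.sum_congr rfl fun j _ => ?_
  rw [Finset.filter_filter]
  congr 1
  ext a
  simp [Prod.ext_iff, and_comm]

theorem om_mul {α : Type} [Fintype α] {N : ℕ} (β γ : Fin N → ℕ) (σ : Equiv.Perm α) :
    om β σ * om γ σ = ∑ w : Equiv.Perm (Fin N), ∑ v : Equiv.Perm (Fin N),
      ∑ F : α → Fin N × Fin N, if ∀ a, F (σ a) = F a then
        uu β w (fun i => ∑ j, cnt F (i, j)) * uu γ v (fun j => ∑ i, cnt F (i, j)) else 0 := by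
  unfold om
  rw [Finset.sum_mul_sum]
  refine Finset.sum_congr rfl fun w _ => Finset.sum_congr rfl fun v _ => ?_
  rw [Finset.sum_mul_sum, ← Fintype.sum_prod_type',
    ← Equiv.sum_comp (Equiv.arrowProdEquivProdArrow α (fun _ => Fin N) (fun _ => Fin N))]
  refine Finset.sum_congr rfl fun F _ => ?_
  have h1 : (fun i => ∑ j, cnt F (i, j)) = cnt (fun a => (F a).1) :=
    funext fun i => (cnt_fst F i).symm
  have h2 : (fun j => ∑ i, cnt F (i, j)) = cnt (fun a => (F a).2) :=
    funext fun i => (cnt_snd F i).symm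
  rw [h1, h2]
  change (if ∀ a, (F (σ a)).1 = (F a).1 then _ else _) *
    (if ∀ a, (F (σ a)).2 = (F a).2 then _ else _) = _
  by_cases h3 : ∀ a, (F (σ a)).1 = (F a).1
  · by_cases h4 : ∀ a, (F (σ a)).2 = (F a).2
    · rw [if_pos h3, if_pos h4, if_pos (fun a => Prod.ext (h3 a) (h4 a))]
      rfl
    · have h5 : ¬ ∀ a, F (σ a) = F a := fun h => h4 fun a => by rw [h]
      rw [if_neg h4, if_neg h5, mul_zero]
  · have h5 : ¬ ∀ a, F (σ a) = F a := fun h => h3 fun a => by rw [h]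
    rw [if_neg h3, if_neg h5, zero_mul]

theorem om_orth {α : Type} [Fintype α] {N : ℕ} (β γ : Fin N → ℕ)
    (hβ : ∑ i, β i = Fintype.card α + ∑ i : Fin N, (i : ℕ)) :
    ∑ σ : Equiv.Perm α, om β σ * om γ σ = Fintype.card (Equiv.Perm α) *
      ∑ w : Equiv.Perm (Fin N), if ∀ i, β (w i) = γ i then (Equiv.Perm.sign w : ℤ) else 0 := by
  simp_rw [om_mul]
  rw [Finset.sum_comm, ← cauchy_count _ β γ hβ, Finset.mul_sum]
  refine Finset.sum_congr rfl fun w _ => ?_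
  rw [Finset.sum_comm, Finset.mul_sum]
  refine Finset.sum_congr rfl fun v _ => ?_
  have hB := burnside (α := α) (fun A : Fin N × Fin N → ℕ =>
    uu β w (fun i => ∑ j, A (i, j)) * uu γ v (fun j => ∑ i, A (i, j)))
  convert hB using 4 <;> rfl

theorem om_self {α : Type} [Fintype α] {N : ℕ} (β : Fin N → ℕ)
    (hβ : ∑ i, β i = Fintype.card α + ∑ i : Fin N, (i : ℕ)) (hinj : Function.Injective β) :
    ∑ σ : Equiv.Perm α, om β σ * om β σ = Fintype.card (Equiv.Perm α) := by
  rw [om_orth β β hβ, Finset.sum_eq_single 1]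
  · simp
  · intro w _ hw
    rw [if_neg]
    intro h
    exact hw (Equiv.ext fun i => hinj (h i))
  · simp

theorem om_ne {α : Type} [Fintype α] {N : ℕ} (β γ : Fin N → ℕ)
    (hβ : ∑ i, β i = Fintype.card α + ∑ i : Fin N, (i : ℕ))
    (hne : ∀ w : Equiv.Perm (Fin N), ¬ ∀ i, β (w i) = γ i) :
    ∑ σ : Equiv.Perm α, om β σ * om γ σ = 0 := by
  rw [om_orth β γ hβ, Finset.sum_eq_zero, mul_zero]
  intro w _
  rw [if_neg (hne w)]

/-- Permutation action on colourings. -/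
def act (α T : Type) : Equiv.Perm α →* Equiv.Perm (α → T) where
  toFun σ := σ.arrowCongr (Equiv.refl T)
  map_one' := by ext; rfl
  map_mul' := by intros; ext; rfl

theorem act_apply {α T : Type} (σ : Equiv.Perm α) (f : α → T) (a : α) :
    act α T σ f a = f (σ⁻¹ a) := rfl

theorem act_fix {α T : Type} (σ : Equiv.Perm α) (f : α → T) :
    act α T σ f = f ↔ ∀ a, f (σ a) = f a := by
  rw [← fix_inv, funext_iff]
  rfl

theorem cnt_act {α T : Type} [Fintype α] (σ : Equiv.Perm α) (f : α → T) :
    cnt (act α T σ f) = cnt f := cnt_comp f σ⁻¹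

theorem om_mem {α : Type} [Fintype α] {N : ℕ} (β : Fin N → ℕ) :
    (fun σ : Equiv.Perm α => (om β σ : ℂ)) ∈ VC (Equiv.Perm α) := by
  have h := wperm_mem_VC (G := Equiv.Perm α) (Equiv.Perm (Fin N) × (α → Fin N))
    { toFun := fun σ => (Equiv.refl _).prodCongr (act α (Fin N) σ)
      map_one' := by ext : 2 <;> simp
      map_mul' := by intros; ext : 2 <;> simp }
    (fun y => uu β y.1 (cnt y.2)) (by
      intro g y
      simp [cnt_act])
  convert h using 3 with σ
  unfold om
  rw [Fintype.sum_prod_type]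
  refine Finset.sum_congr rfl fun w _ => Finset.sum_congr rfl fun f _ => ?_
  refine ite_iff ?_ _ _
  rw [← act_fix]
  simp [Prod.ext_iff]

theorem cnt_blocks {α B T : Type} [Fintype α] [Fintype B] (b : α → B) (m : ℕ)
    (hcard : ∀ r, cnt b r = m) (g : B → T) (i : T) :
    cnt (fun a => g (b a)) i = m * cnt g i := by
  unfold cnt
  rw [Finset.card_eq_sum_card_fiberwise (f := b) (s := Finset.univ.filter fun a => g (b a) = i)
    (t := Finset.univ.filter fun r => g r = i)]
  · rw [mul_comm, ← smul_eq_mul, ← Finset.sum_const]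
    refine Finset.sum_congr rfl fun r hr => ?_
    rw [← hcard r, cnt, Finset.filter_filter]
    congr 1
    ext a
    have hr : g r = i := by simpa using hr
    simp only [Finset.mem_filter, Finset.mem_univ, true_and]
    constructor
    · exact fun h => h.2
    · intro h; exact ⟨h ▸ hr, h⟩
  · intro a ha
    simpa using ha

/-- Value at a permutation whose cycles all have the same length. -/
theorem om_val {α B : Type} [Fintype α] [Fintype B] [DecidableEq B] {N : ℕ} (β : Fin N → ℕ) (σ : Equiv.Perm α)
    (b : α → B) (m : ℕ) (hm : 0 < m) (hcard : ∀ r, cnt b r = m)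
    (hb : ∀ a, b (σ a) = b a)
    (hfix : ∀ f : α → Fin N, (∀ a, f (σ a) = f a) → ∀ a a', b a = b a' → f a = f a') :
    om β σ = ∑ w : Equiv.Perm (Fin N), ∑ g : B → Fin N, uu β w (fun i => m * cnt g i) := by
  have hsurj : Function.Surjective b := by
    intro r
    have : 0 < cnt b r := by rw [hcard]; exact hm
    obtain ⟨a, ha⟩ := Finset.card_pos.1 this
    exact ⟨a, by simpa using ha⟩
  unfold om
  refine Finset.sum_congr rfl fun w _ => ?_
  rw [← Finset.sum_filter]
  symm
  apply Finset.sum_bij (fun g _ => fun a => g (b a))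
  · intro g _
    simp [hb]
  · intro g _ g' _ h
    ext r
    obtain ⟨a, rfl⟩ := hsurj r
    exact congrArg Fin.val (congrFun h a)
  · intro f hf
    have hf : ∀ a, f (σ a) = f a := by simpa using hf
    refine ⟨fun r => f (Function.surjInv hsurj r), Finset.mem_univ _, ?_⟩
    ext a
    exact congrArg Fin.val (hfix f hf _ _ (Function.surjInv_eq hsurj _))
  · intro g _
    congr 1
    ext i
    exact (cnt_blocks b m hcard g i).symm

end GB
namespace GB

theorem uu_sum {N : ℕ} (β c : Fin N → ℕ) (w0 : Equiv.Perm (Fin N))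
    (h : ∀ i, c i + (w0 i : ℕ) = β i) : ∑ w, uu β w c = (Equiv.Perm.sign w0 : ℤ) := by
  rw [Finset.sum_eq_single w0]
  · exact if_pos h
  · intro w _ hw
    apply if_neg
    intro h'
    apply hw
    ext i
    have h1 := h i
    have h2 := h' i
    omega
  · simp

theorem uu_sum_zero {N : ℕ} (β c : Fin N → ℕ)
    (h : ∀ w : Equiv.Perm (Fin N), ¬ ∀ i, c i + (w i : ℕ) = β i) : ∑ w, uu β w c = 0 :=
  Finset.sum_eq_zero fun w _ => if_neg (h w)

theorem cnt_two {T : Type} (g : Fin 2 → T) (i : T) :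
    cnt g i = (if g 0 = i then 1 else 0) + (if g 1 = i then 1 else 0) := by
  unfold cnt
  rw [Finset.card_filter, Fin.sum_univ_two]

/-- Sum over two colours. -/
theorem sum_two {N : ℕ} (m : ℕ) (β : Fin N → ℕ) :
    ∑ w : Equiv.Perm (Fin N), ∑ g : Fin 2 → Fin N, uu β w (fun i => m * cnt g i) =
    ∑ a : Fin N, ∑ b : Fin N, ∑ w : Equiv.Perm (Fin N),
      uu β w (fun i => m * ((if a = i then 1 else 0) + (if b = i then 1 else 0))) := by
  rw [Finset.sum_comm]
  have h := Fintype.sum_prod_type' (fun a b : Fin N => ∑ w : Equiv.Perm (Fin N),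
      uu β w (fun i => m * ((if a = i then 1 else 0) + (if b = i then 1 else 0))))
  rw [← h, ← Equiv.sum_comp (finTwoArrowEquiv (Fin N))]
  refine Finset.sum_congr rfl fun g _ => Finset.sum_congr rfl fun w _ => ?_
  congr 1
  ext i
  rw [cnt_two]
  congr!

/-- beta numbers of hooks -/
def b1 (m : ℕ) (c : Fin (2 * m)) (i : Fin (2 * m)) : ℕ := i + if i = c then 2 * m else 0

/-- beta numbers of double hooks -/
def b2 (m : ℕ) (d d' : Fin (2 * m)) (i : Fin (2 * m)) : ℕ :=
  i + (if i = d then m else 0) + (if i = d' then m else 0)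

theorem val_b1 (m : ℕ) (hm : 0 < m) (c : Fin (2 * m)) :
    ∑ w : Equiv.Perm (Fin (2 * m)), ∑ g : Fin 2 → Fin (2 * m), uu (b1 m c) w (fun i => m * cnt g i)
      = if m ≤ (c : ℕ) then 1 else -1 := by
  rw [sum_two]
  have hS : ∀ a b : Fin (2 * m), ∑ w : Equiv.Perm (Fin (2 * m)),
      uu (b1 m c) w (fun i => m * ((if a = i then 1 else 0) + (if b = i then 1 else 0))) =
      (if a = c then 1 else 0) * (if b = c then 1 else 0)
      - (if a = c then 1 else 0) * (if (b : ℕ) = c + m then 1 else 0)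
      - (if (a : ℕ) = c + m then 1 else 0) * (if b = c then 1 else 0) := by
    have key : ∀ j : Fin (2 * m), j ≠ c → ∀ cc : Fin (2 * m) → ℕ,
        (cc = fun i => m * ((if c = i then 1 else 0) + (if j = i then 1 else 0))) →
        ∑ w : Equiv.Perm (Fin (2 * m)), uu (b1 m c) w cc =
          if (j : ℕ) = c + m then -1 else 0 := by
      intro j hj cc hcc
      split_ifs with hjm
      · rw [uu_sum _ _ (Equiv.swap c j), Equiv.Perm.sign_swap hj.symm]
        · rfl
        · intro i
          rw [hcc]
          unfold b1
          rcases eq_or_ne i c with rfl | hic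
          · simp [hj]; omega
          · rcases eq_or_ne i j with rfl | hij
            · simp [hj, hj.symm]; omega
            · simp [hic, hic.symm, hij.symm, Equiv.swap_apply_of_ne_of_ne hic hij]
      · apply uu_sum_zero
        intro w hw
        rw [hcc] at hw
        obtain ⟨i, hi⟩ := w.surjective c
        have h0 := hw i
        have hc := hw c
        simp only [b1] at h0 hc
        rw [hi] at h0
        rcases eq_or_ne i c with rfl | hic
        · simp [hj] at hc; rw [hi] at hc; omega
        · rcases eq_or_ne i j with rfl | hij
          · simp [hj, hj.symm] at h0; omega
          · simp [hic, hic.symm, hij.symm] at h0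
            exact hic (Fin.ext h0.symm)
    intro a b
    by_cases ha : a = c
    · by_cases hb : b = c
      · subst ha; subst hb
        rw [uu_sum _ _ 1]
        · simp; omega
        · intro i
          unfold b1
          rcases eq_or_ne i b with rfl | hic
          · simp; omega
          · simp [hic, hic.symm]
      · subst ha
        rw [key b hb _ rfl]
        simp [hb]
        split_ifs <;> rfl
    · by_cases hb : b = c
      · subst hb
        rw [key a ha _ (by ext i; rw [add_comm])]
        simp [ha]
        split_ifs <;> rfl
      · rw [uu_sum_zero]
        · simp [ha, hb]
        · intro w hw
          have := hw c
          simp [b1, ha, hb] at this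
          omega
  simp_rw [hS, Finset.sum_sub_distrib, ← Finset.mul_sum, ← Finset.sum_mul]
  have h1 : ∑ a : Fin (2 * m), (if a = c then (1 : ℤ) else 0) = 1 := by simp
  have h2 : ∑ a : Fin (2 * m), (if (a : ℕ) = c + m then (1 : ℤ) else 0) =
      if m ≤ (c : ℕ) then 0 else 1 := by
    split_ifs with h
    · exact Finset.sum_eq_zero fun a _ => if_neg (by omega)
    · rw [Finset.sum_eq_single ⟨c + m, by omega⟩]
      · simp
      · intro b _ hb
        rw [if_neg]
        intro h; exact hb (Fin.ext h)
      · simp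
  rw [h1, h2]
  split_ifs <;> norm_num

theorem val_b2 (m : ℕ) (hm : 0 < m) (d d' : Fin (2 * m)) (hd : m ≤ (d : ℕ)) (hd' : m ≤ (d' : ℕ))
    (hne : d ≠ d') :
    ∑ w : Equiv.Perm (Fin (2 * m)), ∑ g : Fin 2 → Fin (2 * m),
      uu (b2 m d d') w (fun i => m * cnt g i) = 2 := by
  rw [sum_two]
  have hS : ∀ a b : Fin (2 * m), ∑ w : Equiv.Perm (Fin (2 * m)),
      uu (b2 m d d') w (fun i => m * ((if a = i then 1 else 0) + (if b = i then 1 else 0))) =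
      (if a = d then 1 else 0) * (if b = d' then 1 else 0)
      + (if a = d' then 1 else 0) * (if b = d then 1 else 0) := by
    intro a b
    by_cases h : (a = d ∧ b = d') ∨ (a = d' ∧ b = d)
    · rw [uu_sum _ _ 1]
      · rcases h with ⟨rfl, rfl⟩ | ⟨rfl, rfl⟩ <;> simp [hne, hne.symm]
      · intro i
        unfold b2
        rcases h with ⟨rfl, rfl⟩ | ⟨rfl, rfl⟩ <;>
        · simp only [eq_comm (a := i)]
          split_ifs <;> simp <;> omega
    · rw [uu_sum_zero]
      · have : ¬ (a = d ∧ b = d') := fun h1 => h (Or.inl h1)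
        have : ¬ (a = d' ∧ b = d) := fun h1 => h (Or.inr h1)
        split_ifs <;> simp_all
      · intro w hw
        have h1 := hw d
        have h2 := hw d'
        have := (w d).2
        have := (w d').2
        simp only [b2, if_true, hne, hne.symm, if_false] at h1 h2
        apply h
        have g1 : a = d ∨ b = d := by
          by_contra hc
          push Not at hc
          simp [hc.1, hc.2] at h1
          omega
        have g2 : a = d' ∨ b = d' := by
          by_contra hc
          push Not at hc
          simp [hc.1, hc.2] at h2
          omega
        rcases g1 with g1 | g1
        · rcases g2 with g2 | g2
          · exact absurd (g1.symm.trans g2) hne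
          · exact Or.inl ⟨g1, g2⟩
        · rcases g2 with g2 | g2
          · exact Or.inr ⟨g2, g1⟩
          · exact absurd (g1.symm.trans g2) hne
  simp_rw [hS, Finset.sum_add_distrib, ← Finset.mul_sum, ← Finset.sum_mul]
  simp

theorem b1_inj (m : ℕ) (hm : 0 < m) (c : Fin (2 * m)) : Function.Injective (b1 m c) := by
  intro i j h
  simp only [b1] at h
  by_cases h1 : i = c <;> by_cases h2 : j = c <;> simp [h1, h2] at h ⊢ <;> omega

theorem b2_inj (m : ℕ) (hm : 0 < m) (d d' : Fin (2 * m)) (hd : m ≤ (d : ℕ)) (hd' : m ≤ (d' : ℕ))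
    (hne : d ≠ d') : Function.Injective (b2 m d d') := by
  intro i j h
  simp only [b2] at h
  split_ifs at h <;> (apply Fin.ext; simp_all; try omega)

theorem b1_sum (m : ℕ) (c : Fin (2 * m)) :
    ∑ i, b1 m c i = Fintype.card (Fin (2 * m)) + ∑ i : Fin (2 * m), (i : ℕ) := by
  unfold b1
  rw [Finset.sum_add_distrib]
  simp [add_comm]

theorem b2_sum (m : ℕ) (d d' : Fin (2 * m)) :
    ∑ i, b2 m d d' i = Fintype.card (Fin (2 * m)) + ∑ i : Fin (2 * m), (i : ℕ) := by
  unfold b2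
  rw [Finset.sum_add_distrib, Finset.sum_add_distrib]
  simp
  ring

theorem b1_big (m : ℕ) (c : Fin (2 * m)) (v : ℕ) (hv : 2 * m ≤ v) :
    (∃ i, b1 m c i = v) ↔ v = c + 2 * m := by
  unfold b1
  constructor
  · rintro ⟨i, hi⟩
    split_ifs at hi with h
    · rw [← hi, h]
    · omega
  · rintro rfl
    exact ⟨c, by simp⟩

theorem b2_big (m : ℕ) (d d' : Fin (2 * m)) (hd : m ≤ (d : ℕ)) (hd' : m ≤ (d' : ℕ))
    (hne : d ≠ d') (v : ℕ) (hv : 2 * m ≤ v) :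
    (∃ i, b2 m d d' i = v) ↔ v = d + m ∨ v = d' + m := by
  unfold b2
  constructor
  · rintro ⟨i, hi⟩
    by_cases h : i = d
    · subst h; simp [hne] at hi; left; omega
    · by_cases h' : i = d'
      · subst h'; simp [h] at hi; right; omega
      · simp [h, h'] at hi; omega
  · rintro (rfl | rfl)
    · exact ⟨d, by simp [hne]⟩
    · exact ⟨d', by simp [hne.symm]⟩

/-- Index set of the family for the symmetric group. -/
abbrev IG (m : ℕ) : Type := Fin (2 * m) ⊕ {p : Fin m × Fin m // p.1 < p.2}

/-- The upper half embedding. -/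
def up {m : ℕ} (c : Fin m) : Fin (2 * m) := ⟨m + c, by omega⟩

/-- The beta numbers of the family. -/
def bG (m : ℕ) : IG m → Fin (2 * m) → ℕ
  | Sum.inl c => b1 m c
  | Sum.inr p => b2 m (up p.1.1) (up p.1.2)

theorem up_ne {m : ℕ} (p : {p : Fin m × Fin m // p.1 < p.2}) : up p.1.1 ≠ up p.1.2 := by
  intro h
  have h1 := congrArg Fin.val h
  have h2 := p.2
  simp only [up] at h1
  omega

theorem up_le {m : ℕ} (c : Fin m) : m ≤ (up c : ℕ) := Nat.le_add_right _ _

theorem bG_inj (m : ℕ) (hm : 0 < m) (i : IG m) : Function.Injective (bG m i) := by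
  cases i with
  | inl c => exact b1_inj m hm c
  | inr p => exact b2_inj m hm _ _ (up_le _) (up_le _) (up_ne p)

theorem bG_sum (m : ℕ) (i : IG m) :
    ∑ j, bG m i j = Fintype.card (Fin (2 * m)) + ∑ j : Fin (2 * m), (j : ℕ) := by
  cases i with
  | inl c => exact b1_sum m c
  | inr p => exact b2_sum m _ _

/-- Large beta numbers. -/
def big (m : ℕ) : IG m → ℕ → Prop
  | Sum.inl c => fun v => v = c + 2 * m
  | Sum.inr p => fun v => v = up p.1.1 + m ∨ v = up p.1.2 + m

theorem bG_big (m : ℕ) (i : IG m) (v : ℕ) (hv : 2 * m ≤ v) :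
    (∃ j, bG m i j = v) ↔ big m i v := by
  cases i with
  | inl c => exact b1_big m c v hv
  | inr p => exact b2_big m _ _ (up_le _) (up_le _) (up_ne p) v hv

theorem bG_ne (m : ℕ) (i j : IG m) (hij : i ≠ j)
    (w : Equiv.Perm (Fin (2 * m))) : ¬ ∀ a, bG m i (w a) = bG m j a := by
  intro h
  apply hij
  have hr : ∀ v, 2 * m ≤ v → (big m i v ↔ big m j v) := by
    intro v hv
    rw [← bG_big m i v hv, ← bG_big m j v hv]
    constructor
    · rintro ⟨a, rfl⟩
      exact ⟨w.symm a, by rw [← h]; simp⟩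
    · rintro ⟨a, rfl⟩
      exact ⟨w a, h a⟩
  cases i with
  | inl c =>
    cases j with
    | inl c' =>
      have := (hr (c + 2 * m) (by omega)).1 rfl
      simp only [big] at this
      congr 1
      ext
      omega
    | inr p =>
      exfalso
      have h1 := (hr (up p.1.1 + m) (by have := up_le p.1.1; omega)).2 (Or.inl rfl)
      have h2 := (hr (up p.1.2 + m) (by have := up_le p.1.2; omega)).2 (Or.inr rfl)
      simp only [big] at h1 h2
      apply up_ne p
      ext
      omega
  | inr p =>
    cases j with
    | inl c =>
      exfalso
      have h1 := (hr (up p.1.1 + m) (by have := up_le p.1.1; omega)).1 (Or.inl rfl)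
      have h2 := (hr (up p.1.2 + m) (by have := up_le p.1.2; omega)).1 (Or.inr rfl)
      simp only [big] at h1 h2
      apply up_ne p
      ext
      omega
    | inr q =>
      have h1 := (hr (up p.1.1 + m) (by have := up_le p.1.1; omega)).1 (Or.inl rfl)
      have h2 := (hr (up p.1.2 + m) (by have := up_le p.1.2; omega)).1 (Or.inr rfl)
      simp only [big, up] at h1 h2
      have h3 := p.2
      have h4 := q.2
      congr 1
      apply Subtype.ext
      apply Prod.ext <;> ext <;> omega

/-- The values of the family. -/
def vG (m : ℕ) : IG m → ℤ
  | Sum.inl c => if m ≤ (c : ℕ) then 1 else -1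
  | Sum.inr _ => 2

theorem bG_val (m : ℕ) (hm : 0 < m) (i : IG m) :
    ∑ w : Equiv.Perm (Fin (2 * m)), ∑ g : Fin 2 → Fin (2 * m),
      uu (bG m i) w (fun i => m * cnt g i) = vG m i := by
  cases i with
  | inl c => exact val_b1 m hm c
  | inr p => exact val_b2 m hm _ _ (up_le _) (up_le _) (up_ne p)

theorem card_pairs (m : ℕ) :
    2 * Fintype.card {p : Fin m × Fin m // p.1 < p.2} + m = m * m := by
  have h : Fintype.card (Fin m × Fin m) = Fintype.card {p : Fin m × Fin m // p.1 < p.2} +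
      Fintype.card {p : Fin m × Fin m // p.1 = p.2} + Fintype.card {p : Fin m × Fin m // p.2 < p.1} := by
    simp only [Fintype.card_subtype, Finset.card_filter, ← Finset.sum_add_distrib]
    rw [← Finset.card_univ, Finset.card_eq_sum_ones]
    refine Finset.sum_congr rfl fun p _ => ?_
    rcases lt_trichotomy p.1 p.2 with h | h | h
    · simp [h, h.ne, h.not_gt]
    · simp [h]
    · simp [h, h.ne', h.not_gt]
  have h1 : Fintype.card {p : Fin m × Fin m // p.2 < p.1} =
      Fintype.card {p : Fin m × Fin m // p.1 < p.2} :=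
    Fintype.card_congr ((Equiv.prodComm _ _).subtypeEquiv fun _ => Iff.rfl)
  have h2 : Fintype.card {p : Fin m × Fin m // p.1 = p.2} = m := by
    have e : {p : Fin m × Fin m // p.1 = p.2} ≃ Fin m :=
      { toFun := fun p => p.1.1
        invFun := fun c => ⟨(c, c), rfl⟩
        left_inv := fun p => Subtype.ext (Prod.ext rfl p.2)
        right_inv := fun _ => rfl }
    rw [Fintype.card_congr e, Fintype.card_fin]
  rw [h1, h2, Fintype.card_prod, Fintype.card_fin] at h
  omega

end GB
namespace GB
open scoped Fin.NatCast Fin.CommRing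

/-- The product of two `m`-cycles. -/
def xO (m : ℕ) [NeZero m] : Equiv.Perm (Fin 2 × Fin m) :=
  (Equiv.refl _).prodCongr (Equiv.addRight 1)

theorem xO_apply (m : ℕ) [NeZero m] (r : Fin 2) (y : Fin m) : xO m (r, y) = (r, y + 1) := rfl

theorem xO_pow (m : ℕ) [NeZero m] (j : ℕ) (r : Fin 2) (y : Fin m) :
    (xO m ^ j) (r, y) = (r, y + (j : Fin m)) := by
  induction j with
  | zero => simp
  | succ j ih =>
    rw [pow_succ', Equiv.Perm.mul_apply, ih, xO_apply, Nat.cast_succ, add_assoc]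

theorem xO_pow_m (m : ℕ) [NeZero m] : xO m ^ m = 1 := by
  ext1 p
  obtain ⟨r, y⟩ := p
  rw [xO_pow]
  simp

theorem xO_val (m : ℕ) [NeZero m] (r : Fin 2) (y : Fin m) : (xO m ^ (y : ℕ)) (r, 0) = (r, y) := by
  rw [xO_pow]
  simp

theorem commute_pow {m : ℕ} [NeZero m] (h : Equiv.Perm (Fin 2 × Fin m)) (hc : h * xO m = xO m * h)
    (j : ℕ) (p : Fin 2 × Fin m) : h ((xO m ^ j) p) = (xO m ^ j) (h p) := by
  have h1 : Commute h (xO m ^ j) := Commute.pow_right hc j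
  exact congrArg (fun e : Equiv.Perm (Fin 2 × Fin m) => e p) h1.eq

theorem commute_ne {m : ℕ} [NeZero m] (h : Equiv.Perm (Fin 2 × Fin m))
    (hc : h * xO m = xO m * h) : (h (0, 0)).1 ≠ (h (1, 0)).1 := by
  intro heq
  have h1 : h (0, (h (1, 0)).2 - (h (0, 0)).2) = h (1, 0) := by
    rw [← xO_val m 0 ((h (1, 0)).2 - (h (0, 0)).2), commute_pow h hc]
    rcases hp : h (0, 0) with ⟨r, y⟩
    rcases hq : h (1, 0) with ⟨r', y'⟩
    rw [hp, hq] at heq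
    simp only at heq
    rw [xO_pow, heq]
    simp
  have h2 := congrArg Prod.fst (h.injective h1)
  simp at h2

theorem commute_ext {m : ℕ} [NeZero m] (g h : Equiv.Perm (Fin 2 × Fin m))
    (hg : g * xO m = xO m * g) (hh : h * xO m = xO m * h)
    (h0 : g (0, 0) = h (0, 0)) (h1 : (g (1, 0)).2 = (h (1, 0)).2) : g = h := by
  have h2 : g (1, 0) = h (1, 0) := by
    apply Prod.ext _ h1
    have a := commute_ne g hg
    have b := commute_ne h hh
    rw [h0] at a
    omega
  have h3 : ∀ r, g (r, 0) = h (r, 0) := by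
    intro r
    fin_cases r
    · exact h0
    · exact h2
  ext1 p
  obtain ⟨r, y⟩ := p
  rw [← xO_val m r y, commute_pow g hg, commute_pow h hh, h3]

theorem centralizer_le {K : Type} [Group K] [Fintype K] {m : ℕ} [NeZero m]
    (ρ : K →* Equiv.Perm (Fin 2 × Fin m)) (hρ : Function.Injective ρ) (x : K) (hx : ρ x = xO m) :
    (Finset.univ.filter fun h : K => h * x * h⁻¹ = x).card ≤ 2 * m * m := by
  have hc : ∀ h : K, h * x * h⁻¹ = x → ρ h * xO m = xO m * ρ h := by
    intro h hh
    rw [← hx, ← map_mul, ← map_mul]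
    congr 1
    exact mul_inv_eq_iff_eq_mul.1 hh
  have h1 := Finset.card_le_card_of_injOn (s := Finset.univ.filter fun h : K => h * x * h⁻¹ = x)
    (t := (Finset.univ : Finset ((Fin 2 × Fin m) × Fin m)))
    (fun h => (ρ h (0, 0), (ρ h (1, 0)).2)) (by simp) (by
      intro g hg h hh heq
      simp only [Finset.coe_filter, Finset.mem_univ, true_and, Set.mem_ofPred_eq] at hg hh
      simp only [Prod.mk.injEq] at heq
      exact hρ (commute_ext _ _ (hc g hg) (hc h hh) heq.1 heq.2))
  simpa using h1

theorem fix_const {m : ℕ} [NeZero m] {T : Type} (f : Fin 2 × Fin m → T)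
    (hf : ∀ a, f (xO m a) = f a) (a a' : Fin 2 × Fin m) (h : a.1 = a'.1) : f a = f a' := by
  have h1 : ∀ (j : ℕ) a, f ((xO m ^ j) a) = f a := by
    intro j a
    induction j with
    | zero => rfl
    | succ j ih => rw [pow_succ', Equiv.Perm.mul_apply, hf, ih]
  have h2 : ∀ r y, f (r, y) = f (r, 0) := by
    intro r y
    rw [← xO_val m r y, h1]
  obtain ⟨r, y⟩ := a
  obtain ⟨r', y'⟩ := a'
  rw [h2, h2 r', show r = r' from h]

/-- Transport of permutations. -/
def rG (m : ℕ) : Equiv.Perm (Fin (2 * m)) →* Equiv.Perm (Fin 2 × Fin m) :=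
  (finProdFinEquiv.symm.permCongrHom).toMonoidHom

theorem rG_apply (m : ℕ) (σ : Equiv.Perm (Fin (2 * m))) (p : Fin 2 × Fin m) :
    rG m σ p = finProdFinEquiv.symm (σ (finProdFinEquiv p)) := rfl

theorem rG_inj (m : ℕ) : Function.Injective (rG m) :=
  (finProdFinEquiv.symm.permCongrHom).injective

/-- The element of order `m`. -/
def xG (m : ℕ) [NeZero m] : Equiv.Perm (Fin (2 * m)) :=
  (finProdFinEquiv.symm.permCongrHom).symm (xO m)

theorem rG_xG (m : ℕ) [NeZero m] : rG m (xG m) = xO m :=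
  (finProdFinEquiv.symm.permCongrHom).apply_symm_apply (xO m)

theorem xG_pow (m : ℕ) [NeZero m] : xG m ^ m = 1 := by
  apply rG_inj m
  rw [map_pow, rG_xG, xO_pow_m, map_one]

theorem om_xG (m : ℕ) [NeZero m] {N : ℕ} (β : Fin N → ℕ) :
    om β (xG m) = ∑ w : Equiv.Perm (Fin N), ∑ g : Fin 2 → Fin N, uu β w (fun i => m * cnt g i) := by
  have hx : ∀ p, xG m (finProdFinEquiv p) = finProdFinEquiv (xO m p) := by
    intro p
    rw [← rG_xG, rG_apply, Equiv.apply_symm_apply]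
  apply om_val β (xG m) (fun a => (finProdFinEquiv.symm a).1) m (Nat.pos_of_ne_zero (NeZero.ne m))
  · intro r
    unfold cnt
    have : (Finset.univ.filter fun a : Fin (2 * m) => (finProdFinEquiv.symm a).1 = r).card =
        (Finset.univ.filter fun a : Fin 2 × Fin m => a.1 = r).card := by
      apply Finset.card_bij (fun a _ => finProdFinEquiv.symm a)
      · intro a ha; simpa using ha
      · intro a _ b _ h; exact finProdFinEquiv.symm.injective h
      · intro b hb; exact ⟨finProdFinEquiv b, by simpa [-finProdFinEquiv_symm_apply] using hb,
          by simp [-finProdFinEquiv_symm_apply]⟩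
    convert this
    rw [Finset.card_filter, Fintype.sum_prod_type]
    fin_cases r <;> simp
  · intro a
    obtain ⟨p, rfl⟩ := finProdFinEquiv.surjective a
    rw [hx]
    simp [xO]
  · intro f hf a a' h
    obtain ⟨p, rfl⟩ := finProdFinEquiv.surjective a
    obtain ⟨q, rfl⟩ := finProdFinEquiv.surjective a'
    refine fix_const (fun p => f (finProdFinEquiv p)) (fun p => ?_) p q (by simpa using h)
    rw [← hx, hf]

theorem Gside (k : ℕ) : Nonempty (IG (3 ^ k) ≃ IrrCoprime 3 (Equiv.Perm (Fin (2 * 3 ^ k)))) := by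
  have hm : 0 < 3 ^ k := by positivity
  have : NeZero (3 ^ k) := ⟨hm.ne'⟩
  have hv : ∀ i, om (bG (3 ^ k) i) (xG (3 ^ k)) =
      vG (3 ^ k) i := fun i => (om_xG _ _).trans (bG_val _ hm i)
  apply count k (xG (3 ^ k)) (xG_pow _) (fun i : IG (3 ^ k) => om (bG (3 ^ k) i))
  · intro i; exact om_mem _
  · intro i g; exact om_inv _ _
  · intro i j
    split_ifs with h
    · subst h
      convert om_self (bG (3 ^ k) i) (bG_sum _ i) (bG_inj _ hm i)
    · convert om_ne (bG (3 ^ k) i) (bG (3 ^ k) j) (bG_sum _ i) (bG_ne _ i j h)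
  · intro i
    rw [hv]
    rcases i with c | p
    · simp only [vG]
      split_ifs <;> simp
    · simp [vG]
  · simp_rw [hv]
    rw [Fintype.sum_sum_type]
    simp only [vG]
    have h1 : ∀ c : Fin (2 * 3 ^ k), (if 3 ^ k ≤ (c : ℕ) then (1 : ℤ) else -1) ^ 2 = 1 := by
      intro c; split_ifs <;> norm_num
    simp only [h1, Finset.sum_const, Finset.card_univ, Fintype.card_fin, nsmul_eq_mul]
    have h2 := centralizer_le (rG (3 ^ k)) (rG_inj _) (xG (3 ^ k)) (rG_xG _)
    have h3 := card_pairs (3 ^ k)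
    have h4 : 2 * 3 ^ k * 3 ^ k = 2 * 3 ^ k + Fintype.card {p : Fin (3 ^ k) × Fin (3 ^ k) // p.1 < p.2} * 4 := by
      rw [mul_assoc, ← h3]; ring
    rw [h4] at h2
    refine le_trans (Int.ofNat_le.2 h2) ?_
    push_cast
    norm_num

end GB
namespace GB

/-- beta numbers of hooks of size `m` -/
def bc (m : ℕ) (c : Fin m) (i : Fin m) : ℕ := i + if i = c then m else 0

theorem bc_inj (m : ℕ) (c : Fin m) : Function.Injective (bc m c) := by
  intro i j h
  simp only [bc] at h
  by_cases h1 : i = c <;> by_cases h2 : j = c <;> simp [h1, h2] at h ⊢ <;> omega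

theorem bc_sum (m : ℕ) (c : Fin m) :
    ∑ i, bc m c i = Fintype.card (Fin m) + ∑ i : Fin m, (i : ℕ) := by
  unfold bc
  rw [Finset.sum_add_distrib]
  simp [add_comm]

theorem bc_ne (m : ℕ) (c d : Fin m) (hcd : c ≠ d) (w : Equiv.Perm (Fin m)) :
    ¬ ∀ i, bc m c (w i) = bc m d i := by
  intro h
  have h1 := h d
  simp only [bc, if_true] at h1
  split_ifs at h1 with h2
  · rw [h2] at h1
    apply hcd
    ext
    omega
  · omega

theorem bc_orth (m : ℕ) (c d : Fin m) :
    ∑ σ : Equiv.Perm (Fin m), om (bc m c) σ * om (bc m d) σ =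
      if c = d then (Fintype.card (Equiv.Perm (Fin m)) : ℤ) else 0 := by
  split_ifs with h
  · subst h
    convert om_self (bc m c) (bc_sum m c) (bc_inj m c)
  · convert om_ne (bc m c) (bc m d) (bc_sum m c) (bc_ne m c d h)

theorem bc_val (m : ℕ) [NeZero m] (c : Fin m) (z : Equiv.Perm (Fin m))
    (hz : ∀ f : Fin m → Fin m, (∀ a, f (z a) = f a) → ∀ a a', f a = f a') :
    om (bc m c) z = 1 := by
  rw [om_val (bc m c) z (fun _ => ()) m (Nat.pos_of_ne_zero (NeZero.ne m))
    (by intro r; simp [cnt]) (by simp) (fun f hf a a' _ => hz f hf a a'), Finset.sum_comm]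
  rw [Finset.sum_eq_single (fun _ => c)]
  · rw [uu_sum _ _ 1]
    · simp
    · intro i
      unfold bc cnt
      rcases eq_or_ne i c with rfl | h
      · simp; omega
      · simp [h, h.symm]
  · intro g _ hg
    apply uu_sum_zero
    intro w hw
    have h1 := hw c
    have h2 : g () ≠ c := fun h => hg (funext fun _ => h)
    simp [bc, cnt, h2] at h1
    omega
  · simp

theorem card_fix_two (s : Equiv.Perm (Fin 2)) :
    ∑ r : Fin 2, (if s r = r then (1 : ℤ) else 0) = (Equiv.Perm.sign s : ℤ) + 1 := by
  revert s; decide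

theorem perm_two (s : Equiv.Perm (Fin 2)) : s = 1 ∨ s = Equiv.swap 0 1 := by
  revert s; decide

/-- Sign twists of weighted permutation characters are virtual characters. -/
theorem twist_mem {H : Type} [Group H] [Fintype H] (π : H →* Equiv.Perm (Fin 2))
    (Y : Type) [Fintype Y] (φ : H →* Equiv.Perm Y) (ε : Y → ℤ) (P : Y → Prop)
    (hε : ∀ g y, ε (φ g y) = ε y) (hP : ∀ g y, P (φ g y) ↔ P y) :
    (fun g => ((∑ y, if φ g y = y then (if P y then (Equiv.Perm.sign (π g) : ℤ) else 1) * ε y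
      else 0 : ℤ) : ℂ)) ∈ VC H := by
  have h1 := wperm_mem_VC Y φ (fun y => if P y then 0 else ε y) (by intro g y; simp [hε, hP])
  have h2 := wperm_mem_VC Y φ (fun y => if P y then ε y else 0) (by intro g y; simp [hε, hP])
  have h3 := wperm_mem_VC (Y × Fin 2)
    { toFun := fun g => (φ g).prodCongr (π g)
      map_one' := by ext : 2 <;> simp
      map_mul' := by intros; ext : 2 <;> simp }
    (fun y => if P y.1 then ε y.1 else 0) (by intro g y; simp [hε, hP])
  have h4 := sub_mem (add_mem h1 h3) h2
  convert h4 using 1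
  ext g
  simp only [Pi.sub_apply, Pi.add_apply]
  rw [← Int.cast_add, ← Int.cast_sub]
  congr 1
  rw [Fintype.sum_prod_type, ← Finset.sum_add_distrib, ← Finset.sum_sub_distrib]
  refine Finset.sum_congr rfl fun y _ => ?_
  have h5 : ∀ r : Fin 2, (if ((φ g).prodCongr (π g)) (y, r) = (y, r) then
      (if P y then ε y else 0) else 0) =
      (if φ g y = y then (if P y then ε y else 0) else 0) * (if π g r = r then (1 : ℤ) else 0) := by
    intro r
    simp only [Equiv.prodCongr_apply, Prod.map_apply, Prod.mk.injEq]
    split_ifs <;> simp_all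
  have h6 : ∑ r : Fin 2, (if ((φ g).prodCongr (π g)) (y, r) = (y, r) then
      (if P y then ε y else 0) else 0) =
      (if φ g y = y then (if P y then ε y else 0) else 0) * ((Equiv.Perm.sign (π g) : ℤ) + 1) := by
    simp_rw [h5]
    rw [← Finset.mul_sum, card_fix_two]
  have h8 : (if φ g y = y then (if P y then (Equiv.Perm.sign (π g) : ℤ) else 1) * ε y else 0) =
      (if φ g y = y then (if P y then 0 else ε y) else 0) +
      (if φ g y = y then (if P y then ε y else 0) else 0) * ((Equiv.Perm.sign (π g) : ℤ) + 1) -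
      (if φ g y = y then (if P y then ε y else 0) else 0) := by
    split_ifs <;> ring
  rw [h8, ← h6]
  congr 2
  exact Finset.sum_congr rfl fun r _ => ite_iff Iff.rfl _ _

end GB
namespace GB

set_option linter.unusedSectionVars false

section
variable {H : Type} [Group H] [Fintype H] {m : ℕ}
  (ρ : H →* Equiv.Perm (Fin 2 × Fin m)) (π : H →* Equiv.Perm (Fin 2))

/-- Components of an element of the wreath product. -/
def AA (hπ : ∀ h p, (ρ h p).1 = π h p.1) (h : H) (r : Fin 2) : Equiv.Perm (Fin m) :=
  Equiv.ofBijective (fun y => (ρ h (r, y)).2) (by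
    apply (Finite.injective_iff_bijective).1
    intro y y' hy
    have h1 : ρ h (r, y) = ρ h (r, y') := Prod.ext (by rw [hπ, hπ]) hy
    simpa using (ρ h).injective h1)

theorem rho_apply (hπ : ∀ h p, (ρ h p).1 = π h p.1) (h : H) (r : Fin 2) (y : Fin m) :
    ρ h (r, y) = (π h r, AA ρ π hπ h r y) := Prod.ext (hπ _ _) rfl

/-- Labelled colourings. -/
abbrev ZZ (m : ℕ) : Type := (Fin 2 → Fin m × Equiv.Perm (Fin m)) × (Fin 2 × Fin m → Fin m)

/-- The action on labelled colourings. -/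
def phi : H →* Equiv.Perm (ZZ m) where
  toFun h := (act _ _ (π h)).prodCongr (act _ _ (ρ h))
  map_one' := by ext : 2 <;> simp
  map_mul' := by intros; ext : 2 <;> simp

/-- The weight. -/
def nu (κ : Fin m → Fin m → ℤ) (z : ZZ m) : ℤ :=
  κ (z.1 0).1 (z.1 1).1 * ∏ r : Fin 2, uu (bc m (z.1 r).1) (z.1 r).2 (cnt fun y => z.2 (r, y))

/-- Doubly odd labels. -/
def PP (z : ZZ m) : Prop := ∀ r, Equiv.Perm.sign (z.1 r).2 = -1

theorem PP_inv (h : H) (z : ZZ m) : PP (phi ρ π h z) ↔ PP z := by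
  unfold PP
  change (∀ r, Equiv.Perm.sign (z.1 ((π h)⁻¹ r)).2 = -1) ↔ _
  exact (π h)⁻¹.forall_congr_right (q := fun r => Equiv.Perm.sign (z.1 r).2 = -1)

theorem nu_inv (hπ : ∀ h p, (ρ h p).1 = π h p.1) (κ : Fin m → Fin m → ℤ)
    (hκ : ∀ a b, κ a b = κ b a) (h : H) (z : ZZ m) : nu κ (phi ρ π h z) = nu κ z := by
  unfold nu
  have h1 : ∀ r, (phi ρ π h z).1 r = z.1 ((π h)⁻¹ r) := fun r => rfl
  have h2 : ∀ p, (phi ρ π h z).2 p = z.2 ((ρ h)⁻¹ p) := fun r => rfl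
  congr 1
  · rw [h1, h1, ← map_inv]
    rcases perm_two (π h⁻¹) with h3 | h3
    · rw [h3]; rfl
    · rw [h3, Equiv.swap_apply_left, Equiv.swap_apply_right, hκ]
  · rw [← Equiv.prod_comp (π h)⁻¹ (fun r => uu (bc m (z.1 r).1) (z.1 r).2 (cnt fun y => z.2 (r, y)))]
    refine Finset.prod_congr rfl fun r _ => ?_
    rw [h1]
    congr 1
    simp_rw [h2, ← map_inv, rho_apply ρ π hπ]
    exact cnt_comp (fun y => z.2 (π h⁻¹ r, y)) (AA ρ π hπ h⁻¹ r)

/-- The virtual characters of the wreath product. -/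
def th (κ : Fin m → Fin m → ℤ) (t : Prop) (h : H) : ℤ :=
  ∑ z : ZZ m, if phi ρ π h z = z then
    (if (PP z ↔ t) then (Equiv.Perm.sign (π h) : ℤ) else 1) * nu κ z else 0

theorem th_mem (hπ : ∀ h p, (ρ h p).1 = π h p.1) (κ : Fin m → Fin m → ℤ)
    (hκ : ∀ a b, κ a b = κ b a) (t : Prop) : (fun h => (th ρ π κ t h : ℂ)) ∈ VC H := by
  have := twist_mem π (ZZ m) (phi ρ π) (nu κ) (fun z => (PP z ↔ t)) (nu_inv ρ π hπ κ hκ)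
    (by intro g y; rw [PP_inv])
  convert this using 3 with h
  unfold th
  refine Finset.sum_congr rfl fun z _ => ?_
  congr!

theorem th_inv (κ : Fin m → Fin m → ℤ) (t : Prop) (h : H) :
    th ρ π κ t h⁻¹ = th ρ π κ t h := by
  unfold th
  refine Finset.sum_congr rfl fun z _ => ?_
  rw [map_inv π, Equiv.Perm.sign_inv]
  refine ite_iff ?_ _ _
  rw [map_inv, Equiv.Perm.inv_eq_iff_eq]
  exact eq_comm

/-- Coordinates on labelled colourings. -/
def EZ (m : ℕ) : ((Fin m × Equiv.Perm (Fin m)) × (Fin m × Equiv.Perm (Fin m))) ×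
    ((Fin m → Fin m) × (Fin m → Fin m)) ≃ ZZ m :=
  (finTwoArrowEquiv _).symm.prodCongr ((finTwoArrowEquiv _).symm.trans (Equiv.curry _ _ _).symm)

theorem th_expand (κ : Fin m → Fin m → ℤ) (t : Prop) (h : H) :
    th ρ π κ t h = ∑ l0 : Fin m × Equiv.Perm (Fin m), ∑ l1 : Fin m × Equiv.Perm (Fin m),
      ∑ f0 : Fin m → Fin m, ∑ f1 : Fin m → Fin m,
      if phi ρ π h (EZ m ((l0, l1), (f0, f1))) = EZ m ((l0, l1), (f0, f1)) then
        (if ((Equiv.Perm.sign l0.2 = -1 ∧ Equiv.Perm.sign l1.2 = -1) ↔ t) then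
          (Equiv.Perm.sign (π h) : ℤ) else 1) *
        (κ l0.1 l1.1 * (uu (bc m l0.1) l0.2 (cnt f0) * uu (bc m l1.1) l1.2 (cnt f1))) else 0 := by
  unfold th
  rw [← Equiv.sum_comp (EZ m), Fintype.sum_prod_type, Fintype.sum_prod_type]
  refine Finset.sum_congr rfl fun l0 _ => Finset.sum_congr rfl fun l1 _ => ?_
  rw [Fintype.sum_prod_type]
  refine Finset.sum_congr rfl fun f0 _ => Finset.sum_congr rfl fun f1 _ => ?_
  congr 2
  · refine ite_iff ?_ _ _
    unfold PP
    rw [Fin.forall_fin_two]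
    rfl
  · unfold nu
    rw [Fin.prod_univ_two]
    rfl

theorem phi_fix (z : ZZ m) (h : H) :
    phi ρ π h z = z ↔ (∀ r, z.1 (π h r) = z.1 r) ∧ (∀ p, z.2 (ρ h p) = z.2 p) := by
  rw [← act_fix, ← act_fix]
  exact Prod.ext_iff

theorem fix_one (hπ : ∀ h p, (ρ h p).1 = π h p.1) (h : H) (hs : π h = 1)
    (l0 l1 : Fin m × Equiv.Perm (Fin m)) (f0 f1 : Fin m → Fin m) :
    phi ρ π h (EZ m ((l0, l1), (f0, f1))) = EZ m ((l0, l1), (f0, f1)) ↔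
      (∀ y, f0 (AA ρ π hπ h 0 y) = f0 y) ∧ (∀ y, f1 (AA ρ π hπ h 1 y) = f1 y) := by
  rw [phi_fix]
  simp only [hs, Prod.forall, Fin.forall_fin_two, rho_apply ρ π hπ, Equiv.Perm.one_apply]
  simp only [true_and]
  rfl

theorem fix_swap (hπ : ∀ h p, (ρ h p).1 = π h p.1) (h : H) (hs : π h = Equiv.swap 0 1)
    (l0 l1 : Fin m × Equiv.Perm (Fin m)) (f0 f1 : Fin m → Fin m) :
    phi ρ π h (EZ m ((l0, l1), (f0, f1))) = EZ m ((l0, l1), (f0, f1)) ↔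
      l1 = l0 ∧ f1 = (fun y => f0 (AA ρ π hπ h 1 y)) ∧
      (∀ y, f0 ((AA ρ π hπ h 1 * AA ρ π hπ h 0) y) = f0 y) := by
  rw [phi_fix]
  simp only [hs, Prod.forall, Fin.forall_fin_two, rho_apply ρ π hπ, Equiv.swap_apply_left,
    Equiv.swap_apply_right]
  change ((l1 = l0 ∧ l0 = l1) ∧ ((∀ y, f1 (AA ρ π hπ h 0 y) = f0 y) ∧
    (∀ y, f0 (AA ρ π hπ h 1 y) = f1 y))) ↔ _
  constructor
  · rintro ⟨⟨h1, -⟩, h2, h3⟩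
    refine ⟨h1, funext fun y => (h3 y).symm, fun y => ?_⟩
    rw [Equiv.Perm.mul_apply, h3, h2]
  · rintro ⟨h1, h2, h3⟩
    subst h2
    exact ⟨⟨h1, h1.symm⟩, h3, fun y => rfl⟩

theorem th_one (hπ : ∀ h p, (ρ h p).1 = π h p.1) (κ : Fin m → Fin m → ℤ) (t : Prop) (h : H)
    (hs : π h = 1) :
    th ρ π κ t h = ∑ c, ∑ d, κ c d * (om (bc m c) (AA ρ π hπ h 0) * om (bc m d) (AA ρ π hπ h 1)) := by
  rw [th_expand, Fintype.sum_prod_type]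
  refine Finset.sum_congr rfl fun c _ => ?_
  simp_rw [Fintype.sum_prod_type]
  rw [Finset.sum_comm]
  refine Finset.sum_congr rfl fun d _ => ?_
  unfold om
  rw [Finset.sum_mul_sum, Finset.mul_sum]
  refine Finset.sum_congr rfl fun w _ => ?_
  rw [Finset.mul_sum]
  refine Finset.sum_congr rfl fun v _ => ?_
  rw [Finset.sum_mul_sum, Finset.mul_sum]
  refine Finset.sum_congr (by congr!) fun f _ => ?_
  rw [Finset.mul_sum]
  refine Finset.sum_congr (by congr!) fun g _ => ?_
  have key := fix_one ρ π hπ h hs (c, w) (d, v) f g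
  rw [hs, Equiv.Perm.sign_one, Units.val_one, ite_self, one_mul]
  by_cases h1 : ∀ y, f (AA ρ π hπ h 0 y) = f y
  · by_cases h2 : ∀ y, g (AA ρ π hπ h 1 y) = g y
    · rw [if_pos (key.2 ⟨h1, h2⟩), if_pos h1, if_pos h2]
    · rw [if_neg (fun h' => h2 (key.1 h').2), if_neg h2]; ring
  · rw [if_neg (fun h' => h1 (key.1 h').1), if_neg h1]; ring

theorem th_swap (hπ : ∀ h p, (ρ h p).1 = π h p.1) (κ : Fin m → Fin m → ℤ) (t : Prop) (h : H)
    (hs : π h = Equiv.swap 0 1) :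
    th ρ π κ t h = (if t then 1 else -1) *
      ∑ c, κ c c * om (bc m c) (AA ρ π hπ h 1 * AA ρ π hπ h 0) := by
  rw [th_expand, Fintype.sum_prod_type, Finset.mul_sum]
  refine Finset.sum_congr rfl fun c _ => ?_
  unfold om
  rw [Finset.mul_sum, Finset.mul_sum]
  refine Finset.sum_congr rfl fun w _ => ?_
  rw [Finset.sum_eq_single (c, w)]
  · rw [Finset.mul_sum, Finset.mul_sum]
    refine Finset.sum_congr (by congr!) fun f _ => ?_
    rw [Finset.sum_eq_single (fun y => f (AA ρ π hπ h 1 y))]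
    · have key := fix_swap ρ π hπ h hs (c, w) (c, w) f (fun y => f (AA ρ π hπ h 1 y))
      rw [cnt_comp, hs]
      by_cases h1 : ∀ y, f ((AA ρ π hπ h 1 * AA ρ π hπ h 0) y) = f y
      · rw [if_pos (key.2 ⟨rfl, rfl, h1⟩), if_pos h1, Equiv.Perm.sign_swap (by decide)]
        unfold uu
        dsimp only
        by_cases hc : ∀ i, cnt f i + (w i : ℕ) = bc m c i
        · rw [if_pos hc]
          rcases Int.units_eq_one_or (Equiv.Perm.sign w) with h2 | h2 <;>
          by_cases ht : t <;> simp [ht, h2]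
        · rw [if_neg hc]
          simp
      · rw [if_neg (fun h' => h1 (key.1 h').2.2), if_neg h1]; ring
    · intro g _ hg
      exact if_neg (fun h' => hg ((fix_swap ρ π hπ h hs _ _ _ _).1 h').2.1)
    · simp
  · intro l _ hl
    refine Finset.sum_eq_zero fun f _ => Finset.sum_eq_zero fun g _ => ?_
    exact if_neg (fun h' => hl ((fix_swap ρ π hπ h hs _ _ _ _).1 h').1)
  · simp

end

end GB
namespace GB

theorem expand_orth {m : ℕ} (x y : Fin m → ℤ) :
    ∑ σ : Equiv.Perm (Fin m), (∑ c, x c * om (bc m c) σ) * (∑ c, y c * om (bc m c) σ) =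
      (Fintype.card (Equiv.Perm (Fin m)) : ℤ) * ∑ c, x c * y c := by
  simp_rw [Finset.sum_mul_sum]
  rw [Finset.sum_comm, Finset.mul_sum]
  refine Finset.sum_congr rfl fun c _ => ?_
  rw [Finset.sum_comm]
  have h : ∀ d, ∑ σ : Equiv.Perm (Fin m), x c * om (bc m c) σ * (y d * om (bc m d) σ) =
      if c = d then x c * y d * (Fintype.card (Equiv.Perm (Fin m)) : ℤ) else 0 := by
    intro d
    have h1 : ∀ σ : Equiv.Perm (Fin m), x c * om (bc m c) σ * (y d * om (bc m d) σ) =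
        x c * y d * (om (bc m c) σ * om (bc m d) σ) := fun σ => by ring
    simp_rw [h1]
    rw [← Finset.mul_sum, bc_orth]
    split_ifs <;> simp
  rw [Finset.sum_congr rfl fun d _ => h d, Finset.sum_ite_eq, if_pos (Finset.mem_univ _)]
  ring

theorem expand_orth2 {m : ℕ} (κ μ : Fin m → Fin m → ℤ) :
    ∑ a : Equiv.Perm (Fin m), ∑ b : Equiv.Perm (Fin m),
      (∑ c, ∑ d, κ c d * (om (bc m c) a * om (bc m d) b)) *
      (∑ c, ∑ d, μ c d * (om (bc m c) a * om (bc m d) b)) =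
      (Fintype.card (Equiv.Perm (Fin m)) : ℤ) ^ 2 * ∑ c, ∑ d, κ c d * μ c d := by
  have h : ∀ (κ : Fin m → Fin m → ℤ) (a b : Equiv.Perm (Fin m)),
      ∑ c, ∑ d, κ c d * (om (bc m c) a * om (bc m d) b) =
      ∑ d, (∑ c, κ c d * om (bc m c) a) * om (bc m d) b := by
    intro κ a b
    rw [Finset.sum_comm]
    refine Finset.sum_congr rfl fun d _ => ?_
    rw [Finset.sum_mul]
    exact Finset.sum_congr rfl fun c _ => by ring
  simp_rw [h, expand_orth]
  rw [← Finset.mul_sum, Finset.sum_comm]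
  simp_rw [expand_orth]
  rw [← Finset.mul_sum, Finset.sum_comm (f := fun c d => κ c d * μ c d)]
  ring

theorem expand_orth3 {m : ℕ} (x y : Fin m → ℤ) :
    ∑ a : Equiv.Perm (Fin m), ∑ b : Equiv.Perm (Fin m),
      (∑ c, x c * om (bc m c) (b * a)) * (∑ c, y c * om (bc m c) (b * a)) =
      (Fintype.card (Equiv.Perm (Fin m)) : ℤ) ^ 2 * ∑ c, x c * y c := by
  have h : ∀ a : Equiv.Perm (Fin m), ∑ b : Equiv.Perm (Fin m),
      (∑ c, x c * om (bc m c) (b * a)) * (∑ c, y c * om (bc m c) (b * a)) =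
      (Fintype.card (Equiv.Perm (Fin m)) : ℤ) * ∑ c, x c * y c := by
    intro a
    rw [← expand_orth]
    exact Equiv.sum_comp (Equiv.mulRight a) (fun σ => (∑ c, x c * om (bc m c) σ) * (∑ c, y c * om (bc m c) σ))
  rw [Finset.sum_congr rfl fun a _ => h a, Finset.sum_const, Finset.card_univ, nsmul_eq_mul]
  ring

theorem sum_perm_two (A B : ℤ) :
    ∑ s : Equiv.Perm (Fin 2), (if s = 1 then A else B) = A + B := by
  have h : (Finset.univ : Finset (Equiv.Perm (Fin 2))) = {1, Equiv.swap 0 1} := by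
    ext s
    simpa using perm_two s
  have h1 : (1 : Equiv.Perm (Fin 2)) ≠ Equiv.swap 0 1 := by decide
  rw [h, Finset.sum_pair h1, if_pos rfl, if_neg h1.symm]

section
variable {H : Type} [Group H] [Fintype H] {m : ℕ}
  (ρ : H →* Equiv.Perm (Fin 2 × Fin m)) (π : H →* Equiv.Perm (Fin 2))

theorem psi_bij [NeZero m] (hπ : ∀ h p, (ρ h p).1 = π h p.1) (hρ : Function.Injective ρ)
    (hs : ∀ (τ : Equiv.Perm (Fin 2 × Fin m)) (s : Equiv.Perm (Fin 2)),
      (∀ p, (τ p).1 = s p.1) → ∃ h, ρ h = τ) :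
    Function.Bijective (fun h : H => (π h, AA ρ π hπ h 0, AA ρ π hπ h 1)) := by
  constructor
  · intro h h' e
    simp only [Prod.mk.injEq] at e
    obtain ⟨e1, e2, e3⟩ := e
    apply hρ
    ext1 ⟨r, y⟩
    rw [rho_apply ρ π hπ, rho_apply ρ π hπ, e1]
    fin_cases r
    · exact Prod.ext rfl (congrArg (fun q : Equiv.Perm (Fin m) => q y) e2)
    · exact Prod.ext rfl (congrArg (fun q : Equiv.Perm (Fin m) => q y) e3)
  · rintro ⟨s, a, b⟩
    obtain ⟨h, hh⟩ := hs (Equiv.prodShear s (fun r => if r = 0 then a else b)) s (fun p => rfl)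
    have h1 : ∀ r y, ρ h (r, y) = (s r, (if r = 0 then a else b) y) := by
      intro r y; rw [hh]; rfl
    refine ⟨h, ?_⟩
    refine Prod.ext ?_ (Prod.ext ?_ ?_)
    · ext1 r
      exact (hπ h (r, 0)).symm.trans (congrArg Prod.fst (h1 r 0))
    · ext1 y
      exact (congrArg Prod.snd (h1 0 y)).trans (by simp)
    · ext1 y
      exact (congrArg Prod.snd (h1 1 y)).trans (by simp)

theorem card_H [NeZero m] (hπ : ∀ h p, (ρ h p).1 = π h p.1) (hρ : Function.Injective ρ)
    (hs : ∀ (τ : Equiv.Perm (Fin 2 × Fin m)) (s : Equiv.Perm (Fin 2)),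
      (∀ p, (τ p).1 = s p.1) → ∃ h, ρ h = τ) :
    Fintype.card H = 2 * Fintype.card (Equiv.Perm (Fin m)) ^ 2 := by
  rw [Fintype.card_of_bijective (psi_bij ρ π hπ hρ hs), Fintype.card_prod, Fintype.card_prod,
    Fintype.card_perm (α := Fin 2), Fintype.card_fin, pow_two]
  rfl

theorem th_orth [NeZero m] (hπ : ∀ h p, (ρ h p).1 = π h p.1) (hρ : Function.Injective ρ)
    (hs : ∀ (τ : Equiv.Perm (Fin 2 × Fin m)) (s : Equiv.Perm (Fin 2)),
      (∀ p, (τ p).1 = s p.1) → ∃ h, ρ h = τ) (κ μ : Fin m → Fin m → ℤ) (t u : Prop) :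
    ∑ h, th ρ π κ t h * th ρ π μ u h = (Fintype.card (Equiv.Perm (Fin m)) : ℤ) ^ 2 *
      (∑ c, ∑ d, κ c d * μ c d +
        (if t then 1 else -1) * (if u then 1 else -1) * ∑ c, κ c c * μ c c) := by
  rw [Fintype.sum_bijective _ (psi_bij ρ π hπ hρ hs) _
    (fun q => if q.1 = 1 then
      (∑ c, ∑ d, κ c d * (om (bc m c) q.2.1 * om (bc m d) q.2.2)) *
      (∑ c, ∑ d, μ c d * (om (bc m c) q.2.1 * om (bc m d) q.2.2)) else
      (if t then 1 else -1) * (if u then 1 else -1) *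
      ((∑ c, κ c c * om (bc m c) (q.2.2 * q.2.1)) * (∑ c, μ c c * om (bc m c) (q.2.2 * q.2.1))))]
  · rw [Fintype.sum_prod_type, Finset.sum_comm]
    simp only [sum_perm_two]
    rw [Finset.sum_add_distrib, ← Finset.mul_sum, Fintype.sum_prod_type, Fintype.sum_prod_type,
      expand_orth2, expand_orth3]
    ring
  · intro h
    rcases perm_two (π h) with h1 | h1
    · rw [if_pos h1, th_one ρ π hπ _ _ _ h1, th_one ρ π hπ _ _ _ h1]
    · rw [if_neg (by dsimp only; rw [h1]; decide), th_swap ρ π hπ _ _ _ h1, th_swap ρ π hπ _ _ _ h1]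
      ring

end

/-- The index set for the wreath product. -/
abbrev IH (m : ℕ) : Type := (Fin m × Bool) ⊕ {p : Fin m × Fin m // p.1 < p.2}

/-- The coefficient arrays. -/
def KK {m : ℕ} : IH m → Fin m → Fin m → ℤ
  | .inl c => fun a b => (if a = c.1 then 1 else 0) * (if b = c.1 then 1 else 0)
  | .inr p => fun a b => (if a = p.1.1 then 1 else 0) * (if b = p.1.2 then 1 else 0) +
      (if a = p.1.2 then 1 else 0) * (if b = p.1.1 then 1 else 0)

/-- The choice of extension. -/
def TT {m : ℕ} : IH m → Prop
  | .inl c => c.2 = true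
  | .inr _ => True

theorem KK_symm {m : ℕ} (i : IH m) (a b : Fin m) : KK i a b = KK i b a := by
  rcases i with c | p
  · exact mul_comm _ _
  · simp only [KK]; ring

theorem KK_sum {m : ℕ} (i : IH m) (F : Fin m → Fin m → ℤ) :
    ∑ c, ∑ d, KK i c d * F c d = match i with
      | .inl c => F c.1 c.1
      | .inr p => F p.1.1 p.1.2 + F p.1.2 p.1.1 := by
  rcases i with c | p
  · simp [KK, mul_assoc]
  · simp [KK, mul_assoc, add_mul, Finset.sum_add_distrib]

theorem KK_diag {m : ℕ} (i : IH m) (F : Fin m → ℤ) :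
    ∑ c, KK i c c * F c = match i with
      | .inl c => F c.1
      | .inr _ => 0 := by
  rcases i with c | p
  · simp [KK, mul_assoc]
  · have h := p.2.ne
    simp [KK, mul_assoc, add_mul, Finset.sum_add_distrib, h, h.symm]

theorem KK_orth {m : ℕ} (i j : IH m) :
    (∑ c, ∑ d, KK i c d * KK j c d + (if TT i then 1 else -1) * (if TT j then 1 else -1) *
      ∑ c, KK i c c * KK j c c) = if i = j then 2 else 0 := by
  rw [KK_sum, KK_diag i (fun c => KK j c c)]
  rcases i with ⟨c, t⟩ | ⟨⟨a, b⟩, hp⟩ <;> rcases j with ⟨d, u⟩ | ⟨⟨a', b'⟩, hq⟩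
  · by_cases h : c = d
    · subst h
      cases t <;> cases u <;> simp [KK, TT]
    · simp [KK, h]
  · have h : a' ≠ b' := ne_of_lt hq
    have h1 : c = a' → c ≠ b' := by rintro rfl; exact h
    by_cases h2 : c = a'
    · simp [KK, h1 h2]
    · simp [KK, h2]
  · have h : a ≠ b := ne_of_lt hp
    have h1 : a = d → b ≠ d := by rintro rfl; exact h.symm
    by_cases h2 : a = d
    · simp [KK, h1 h2]
    · simp [KK, h2]
  · simp only [KK, mul_zero, add_zero, Sum.inr.injEq, Subtype.mk.injEq, Prod.mk.injEq]
    simp only at hp hq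
    split_ifs <;> omega

end GB
namespace GB
open scoped Fin.NatCast Fin.CommRing

theorem Hside_aux (k : ℕ) {H : Type} [Group H] [Fintype H] [NeZero (3 ^ k)]
    (ρ : H →* Equiv.Perm (Fin 2 × Fin (3 ^ k))) (π : H →* Equiv.Perm (Fin 2))
    (hπ : ∀ h p, (ρ h p).1 = π h p.1) (hρ : Function.Injective ρ)
    (hs : ∀ (τ : Equiv.Perm (Fin 2 × Fin (3 ^ k))) (s : Equiv.Perm (Fin 2)),
      (∀ p, (τ p).1 = s p.1) → ∃ h, ρ h = τ) :
    Nonempty (IH (3 ^ k) ≃ IrrCoprime 3 H) := by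
  obtain ⟨x, hx⟩ := hs (xO (3 ^ k)) 1 (fun p => by rw [xO_apply]; rfl)
  have hx1 : π x = 1 := by
    ext1 r
    rw [← hπ x (r, 0), hx, xO_apply]
    rfl
  have hxA : ∀ r c, om (bc (3 ^ k) c) (AA ρ π hπ x r) = 1 := by
    intro r c
    apply bc_val
    intro f hf a a'
    have h1 : ∀ y, AA ρ π hπ x r y = y + 1 := by
      intro y
      have := rho_apply ρ π hπ x r y
      rw [hx, xO_apply] at this
      exact (congrArg Prod.snd this).symm
    refine fix_const (fun p => f p.2) ?_ (0, a) (0, a') rfl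
    rintro ⟨r', y⟩
    rw [xO_apply]
    dsimp only
    rw [← h1, hf]
  have hv : ∀ i, th ρ π (KK i) (TT i) x = match i with
      | .inl _ => 1
      | .inr _ => 2 := by
    intro i
    rw [th_one ρ π hπ _ _ _ hx1]
    simp_rw [hxA]
    rw [KK_sum]
    rcases i with c | p <;> rfl
  apply count k x (hρ (by rw [map_pow, hx, xO_pow_m, map_one]))
    (fun i : IH (3 ^ k) => th ρ π (KK i) (TT i))
  · intro i; exact th_mem ρ π hπ _ (KK_symm i) _
  · intro i g; exact th_inv ρ π _ _ _
  · intro i j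
    rw [th_orth ρ π hπ hρ hs, KK_orth, card_H ρ π hπ hρ hs]
    split_ifs <;> push_cast <;> ring
  · intro i
    rw [hv]
    rcases i with c | p <;> simp
  · simp_rw [hv]
    rw [Fintype.sum_sum_type]
    simp only [Finset.sum_const, Finset.card_univ, Fintype.card_prod, Fintype.card_fin,
      Fintype.card_bool, nsmul_eq_mul]
    have h2 := centralizer_le ρ hρ x hx
    have h3 := card_pairs (3 ^ k)
    have h4 : 2 * 3 ^ k * 3 ^ k = 3 ^ k * 2 + Fintype.card {p : Fin (3 ^ k) × Fin (3 ^ k) // p.1 < p.2} * 4 := by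
      rw [mul_assoc, ← h3]; ring
    rw [h4] at h2
    refine le_trans (Int.ofNat_le.2 h2) ?_
    push_cast
    norm_num

theorem blk (m : ℕ) (i : Fin (2 * m)) :
    ((finProdFinEquiv.symm i).1 : ℕ) = (i : ℕ) / m := rfl

theorem Hside (k : ℕ) (H : Subgroup (Equiv.Perm (Fin (2 * 3 ^ k))))
    (hH : ∀ σ : Equiv.Perm (Fin (2 * 3 ^ k)), σ ∈ H ↔
      ∀ r : ℕ, r < 2 → ∃ r' : ℕ, r' < 2 ∧
        (⇑σ '' {i : Fin (2 * 3 ^ k) | (i : ℕ) / 3 ^ k = r}) =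
          {i : Fin (2 * 3 ^ k) | (i : ℕ) / 3 ^ k = r'}) :
    Nonempty (IH (3 ^ k) ≃ IrrCoprime 3 ↥H) := by
  have hm : 0 < 3 ^ k := by positivity
  have : NeZero (3 ^ k) := ⟨hm.ne'⟩
  let ρ : ↥H →* Equiv.Perm (Fin 2 × Fin (3 ^ k)) := (rG (3 ^ k)).comp H.subtype
  have hb : ∀ (h : ↥H) (p : Fin 2 × Fin (3 ^ k)), (ρ h p).1 = (ρ h (p.1, 0)).1 := by
    rintro h ⟨r, y⟩
    obtain ⟨r', -, hr⟩ := (hH h.1).1 h.2 r r.2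
    have h1 : ∀ y, ((ρ h (r, y)).1 : ℕ) = r' := by
      intro y
      have h2 : h.1 (finProdFinEquiv (r, y)) ∈ {i : Fin (2 * 3 ^ k) | (i : ℕ) / 3 ^ k = r'} := by
        rw [← hr]
        refine ⟨_, ?_, rfl⟩
        change ((finProdFinEquiv (r, y) : Fin (2 * 3 ^ k)) : ℕ) / 3 ^ k = r
        rw [← blk, Equiv.symm_apply_apply]
      exact h2
    apply Fin.ext
    rw [h1, h1]
  let π : ↥H →* Equiv.Perm (Fin 2) := MonoidHom.toHomPerm
    { toFun := fun h r => (ρ h (r, 0)).1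
      map_one' := by funext r; rw [map_one]; rfl
      map_mul' := by
        intro g h
        funext r
        rw [map_mul, Equiv.Perm.mul_apply, hb]
        rfl }
  refine Hside_aux k ρ π hb ((rG_inj _).comp Subtype.val_injective) ?_
  intro τ s hτ
  obtain ⟨σ, rfl⟩ := (finProdFinEquiv.symm.permCongrHom (α := Fin (2 * 3 ^ k))).surjective τ
  have hσ : ∀ i : Fin (2 * 3 ^ k), (finProdFinEquiv.symm (σ i)).1 = s (finProdFinEquiv.symm i).1 := by
    intro i
    have := hτ (finProdFinEquiv.symm i)
    rw [← this]
    change _ = (finProdFinEquiv.symm (σ (finProdFinEquiv (finProdFinEquiv.symm i)))).1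
    rw [Equiv.apply_symm_apply]
  refine ⟨⟨σ, (hH σ).2 ?_⟩, rfl⟩
  intro r hr
  refine ⟨s ⟨r, hr⟩, (s ⟨r, hr⟩).2, ?_⟩
  ext j
  constructor
  · rintro ⟨i, hi, rfl⟩
    change _ / _ = _ at hi ⊢
    rw [← blk, hσ]
    rw [← blk] at hi
    congr 2
    exact Fin.ext hi
  · intro hj
    refine ⟨σ.symm j, ?_, σ.apply_symm_apply j⟩
    change _ / _ = _ at hj ⊢
    have h1 := hσ (σ.symm j)
    rw [Equiv.apply_symm_apply] at h1
    rw [← blk] at hj ⊢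
    have h2 := s.injective (h1.symm.trans (Fin.ext hj))
    rw [h2]

theorem IGIH (m : ℕ) : Nonempty (IG m ≃ IH m) := by
  refine ⟨Equiv.sumCongr (Fintype.equivOfCardEq ?_) (Equiv.refl _)⟩
  rw [Fintype.card_prod, Fintype.card_fin, Fintype.card_fin, Fintype.card_bool, mul_comm]

end GB

/-- For `k ≥ 1`, let `H ≤ S_{2·3^k}` be the stabilizer of the partition of `{0,…,2·3^k-1}`
into the two consecutive blocks of size `3^k` (the block of `i` being `i / 3^k`), so that
`H ≅ S_{3^k} ≀ S_2`.  Then there is a bijection between `Irr_{3'}(S_{2·3^k})` and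
`Irr_{3'}(H)`. -/
theorem global_bijection_two_three_pow (k : ℕ) (hk : 1 ≤ k)
    (H : Subgroup (Equiv.Perm (Fin (2 * 3 ^ k))))
    (hH : ∀ σ : Equiv.Perm (Fin (2 * 3 ^ k)), σ ∈ H ↔
      ∀ r : ℕ, r < 2 → ∃ r' : ℕ, r' < 2 ∧
        (⇑σ '' {i : Fin (2 * 3 ^ k) | (i : ℕ) / 3 ^ k = r}) =
          {i : Fin (2 * 3 ^ k) | (i : ℕ) / 3 ^ k = r'}) :
    Nonempty ((IrrCoprime 3 (Equiv.Perm (Fin (2 * 3 ^ k)))) ≃ (IrrCoprime 3 ↥H)) := by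
  obtain ⟨e1⟩ := GB.Gside k
  obtain ⟨e2⟩ := GB.Hside k H hH
  obtain ⟨e3⟩ := GB.IGIH (3 ^ k)
  exact ⟨e1.symm.trans (e3.trans e2)⟩
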